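/- Let γ : [0, 2π] → ℝ² be a C¹ simple closed curve (γ(0) = γ(2π), γ injective on [0, 2π), γ' nonvanishing), and let Ω be the bounded open region enclosed by γ. Then the double contour integral of the logarithmic kernel satisfies ∫₀^{2π} ∫₀^{2π} log ‖γ(s) − γ(t)‖ · ⟨γ'(s), γ'(t)⟩ ds dt = −2π · area(Ω), where area(Ω) is the Lebesgue measure of Ω. (The integrand has an integrable logarithmic singularity on the diagonal, so the double integral is absolutely convergent.) -/

import Mathlib

noncomputable section

open MeasureTheory Filter Set
open scoped RealInnerProductSpace Topology

abbrev E3 : Type := EuclideanSpace ℝ (Fin 3)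
abbrev E2 : Type := EuclideanSpace ℝ (Fin 2)

def mk3 (a b c : ℝ) : E3 := (EuclideanSpace.equiv (Fin 3) ℝ).symm ![a, b, c]

def e3 (i : Fin 3) : E3 := EuclideanSpace.single i 1

/-- `∂_j v_i` at `p`. -/
def pder (v : E3 → E3) (i j : Fin 3) (p : E3) : ℝ := fderiv ℝ v p (e3 j) i

def div3 (v : E3 → E3) (p : E3) : ℝ := ∑ i, pder v i i p

def curl3 (v : E3 → E3) (p : E3) : E3 :=
  mk3 (pder v 2 1 p - pder v 1 2 p) (pder v 0 2 p - pder v 2 0 p)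
    (pder v 1 0 p - pder v 0 1 p)

def lap3 (f : E3 → ℝ) (p : E3) : ℝ :=
  ∑ j, fderiv ℝ (fun x => fderiv ℝ f x (e3 j)) p (e3 j)

def IsTangentAt (S : Set E3) (p v : E3) : Prop :=
  ∃ γ : ℝ → E3, (∀ t, γ t ∈ S) ∧ γ 0 = p ∧ HasDerivAt γ v 0

def IsSurface (k : ℕ∞) (S : Set E3) : Prop :=
  ∀ p ∈ S, ∃ (f : E2 → E3) (U : Set E2) (V : Set E3),
    IsOpen U ∧ IsOpen V ∧ p ∈ V ∧ ContDiffOn ℝ k f U ∧ Set.InjOn f U ∧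
    f '' U = S ∩ V ∧ ∀ x ∈ U, Function.Injective (fderiv ℝ f x)

structure CVSBase (S Ωm Ωp : Set E3) (vm vp : E3 → E3) : Prop where
  openm : IsOpen Ωm
  openp : IsOpen Ωp
  disj : Disjoint Ωm Ωp
  disjm : Disjoint Ωm S
  disjp : Disjoint Ωp S
  clm : S ⊆ closure Ωm
  clp : S ⊆ closure Ωp
  smoothm : ∃ W, IsOpen W ∧ Ωm ∪ S ⊆ W ∧ ContDiffOn ℝ 1 vm W
  smoothp : ∃ W, IsOpen W ∧ Ωp ∪ S ⊆ W ∧ ContDiffOn ℝ 1 vp W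
  divm : ∀ p ∈ Ωm, div3 vm p = 0
  divp : ∀ p ∈ Ωp, div3 vp p = 0
  curlm : ∀ p ∈ Ωm, curl3 vm p = 0
  curlp : ∀ p ∈ Ωp, curl3 vp p = 0
  tangentm : ∀ p ∈ S, IsTangentAt S p (vm p)
  tangentp : ∀ p ∈ S, IsTangentAt S p (vp p)

structure CVSPair (S Ωm Ωp : Set E3) (vm vp : E3 → E3)
    extends CVSBase S Ωm Ωp vm vp : Prop where
  strain : ∀ p ∈ S, (fderiv ℝ vp p + fderiv ℝ vm p) (vp p - vm p) = 0
  bernoulli : ∀ p ∈ S, ∀ᶠ q in 𝓝[S] p,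
    ‖vp q‖ ^ 2 - ‖vm q‖ ^ 2 = ‖vp p‖ ^ 2 - ‖vm p‖ ^ 2

/-- the open region `Ωm` is the bounded region enclosed by the closed surface `S`,
and `Ωp` is its exterior. -/
structure EnclosedBy (S Ωm Ωp : Set E3) : Prop where
  openm : IsOpen Ωm
  bounded : Bornology.IsBounded Ωm
  fr : frontier Ωm = S
  plus : Ωp = (Ωm ∪ S)ᶜ

/-!
Green's formula, applied once in each variable to the regularised kernel `½ log (‖z‖² + ε²)`, turns
the energy of the curve into minus the integral over `Ω × Ω` of the Laplacian
`2 ε² / (‖z‖² + ε²)²` of the kernel. This Laplacian is an approximate identity of mass `2π`, so the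
limit `ε → 0` leaves `-2π` times the area of `Ω`.

Green's formula needs no regularity of `Ω` beyond its frontier being the curve: near a point of the
curve each of the two sides of a collar lies inside or outside `Ω`, which fixes a local sign, and
these signs agree along the curve because it is connected. Only the base point, where the closed
curve may have a corner, escapes the collars; cutting it out costs nothing in the limit because a
point of the plane has zero `W^{1,1}` capacity.
-/

theorem integrableOn_of_continuous_of_isBounded {X F : Type*} [MetricSpace X] [ProperSpace X]
    [MeasurableSpace X] [OpensMeasurableSpace X] [NormedAddCommGroup F] {μ : Measure X}
    [IsFiniteMeasureOnCompacts μ] {f : X → F} (hf : Continuous f) {S : Set X}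
    (hS : Bornology.IsBounded S) : IntegrableOn f S μ :=
  (hf.continuousOn.integrableOn_compact hS.isCompact_closure).mono_set subset_closure

theorem integrable_prod_restrict_of_continuous {X Y F : Type*}
    [MetricSpace X] [ProperSpace X] [MeasurableSpace X] [OpensMeasurableSpace X]
    [MetricSpace Y] [ProperSpace Y] [MeasurableSpace Y] [OpensMeasurableSpace Y]
    [NormedAddCommGroup F] {μ : Measure X} {ν : Measure Y}
    [SFinite μ] [SFinite ν] [IsFiniteMeasureOnCompacts (μ.prod ν)]
    {A : Set X} {B : Set Y} (hA : Bornology.IsBounded A) (hB : Bornology.IsBounded B)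
    {f : X × Y → F} (hf : Continuous f) :
    Integrable f ((μ.restrict A).prod (ν.restrict B)) := by
  rw [Measure.prod_restrict]
  exact integrableOn_of_continuous_of_isBounded hf (hA.prod hB)

theorem eventually_forall_eq_imp_mem {X Y : Type*} [TopologicalSpace X] [TopologicalSpace Y]
    [T2Space Y] {f : X → Y} {K U : Set X} {y₀ : Y} (hf : ContinuousOn f K) (hK : IsCompact K)
    (hU : IsOpen U) (h : ∀ x ∈ K, f x = y₀ → x ∈ U) :
    ∀ᶠ y in 𝓝 y₀, ∀ x ∈ K, f x = y → x ∈ U := by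
  have hclosed : IsClosed (f '' (K \ U)) :=
    ((hK.diff hU).image_of_continuousOn (hf.mono sdiff_subset)).isClosed
  have hy₀ : y₀ ∉ f '' (K \ U) := fun ⟨x, hx, hxy⟩ => hx.2 (h x hx.1 hxy)
  filter_upwards [hclosed.isOpen_compl.mem_nhds hy₀] with y hy x hx hxy
  exact by_contra fun hxU => hy ⟨x, ⟨hx, hxU⟩, hxy⟩

theorem subset_or_disjoint_of_disjoint_frontier {X : Type*} [TopologicalSpace X] {S Ω : Set X}
    (hS : IsPreconnected S) (hd : Disjoint S (frontier Ω)) (hΩ : IsOpen Ω) :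
    S ⊆ Ω ∨ Disjoint S Ω := by
  have hcover : S ⊆ Ω ∪ (closure Ω)ᶜ := fun x hx => by
    by_contra hc
    simp only [mem_union, mem_compl_iff, not_or, not_not] at hc
    exact disjoint_left.1 hd hx (hΩ.frontier_eq ▸ ⟨hc.2, hc.1⟩)
  refine or_iff_not_imp_right.2 fun h => ?_
  exact hS.subset_left_of_subset_union hΩ isClosed_closure.isOpen_compl
    (disjoint_compl_right.mono_left subset_closure) hcover (not_disjoint_iff_nonempty_inter.1 h)

theorem exists_contDiff_add_tsupport_subset {E F : Type*}
    [NormedAddCommGroup E] [NormedSpace ℝ E] [FiniteDimensional ℝ E]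
    [NormedAddCommGroup F] [NormedSpace ℝ F] {n : ℕ∞} {f : E → F} (hf : ContDiff ℝ n f)
    {U V : Set E} (hU : IsOpen U) (hV : IsOpen V) (hfUV : tsupport f ⊆ U ∪ V) :
    ∃ g h : E → F, ContDiff ℝ n g ∧ ContDiff ℝ n h ∧
      tsupport g ⊆ U ∧ tsupport h ⊆ V ∧ f = g + h := by
  have hdisj : Disjoint (tsupport f \ U) (tsupport f \ V) := disjoint_left.2 fun x hx hx' =>
    (hfUV hx.1).elim hx.2 hx'.2
  obtain ⟨χ, hχU, hχV, -⟩ := exists_contMDiffMap_zero_one_nhds_of_isClosed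
    (modelWithCornersSelf ℝ E) (n := n) ((isClosed_tsupport f).sdiff hU)
    ((isClosed_tsupport f).sdiff hV) hdisj
  have hχ : ContDiff ℝ n χ := χ.contMDiff.contDiff
  refine ⟨fun x => χ x • f x, fun x => (1 - χ x) • f x, hχ.smul hf,
    (contDiff_const.sub hχ).smul hf, fun x hx => ?_, fun x hx => ?_, ?_⟩
  · by_contra hxU
    refine notMem_tsupport_iff_eventuallyEq.2 ?_ hx
    filter_upwards [eventually_nhdsSet_iff_forall.1 hχU x
      ⟨tsupport_smul_subset_right _ _ hx, hxU⟩] with y hy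
    simp [hy]
  · by_contra hxV
    refine notMem_tsupport_iff_eventuallyEq.2 ?_ hx
    filter_upwards [eventually_nhdsSet_iff_forall.1 hχV x
      ⟨tsupport_smul_subset_right _ _ hx, hxV⟩] with y hy
    simp [hy]
  · ext x
    simp [← add_smul]

/-- The determinant of two plane vectors. The flux of the vector field `φ v` through the curve `γ`
is `∫ φ(γ(t)) wedge (γ'(t)) v dt`, up to orientation. -/
def wedge (a b : ℝ × ℝ) : ℝ := a.1 * b.2 - a.2 * b.1

@[fun_prop]
theorem continuous_wedge {X : Type*} [TopologicalSpace X] {f g : X → ℝ × ℝ}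
    (hf : Continuous f) (hg : Continuous g) : Continuous fun x => wedge (f x) (g x) := by
  unfold wedge
  fun_prop

theorem wedge_smul_eq (u n v : ℝ × ℝ) : wedge u n • v = wedge v n • u + wedge u v • n := by
  ext <;> simp only [wedge, Prod.smul_fst, Prod.smul_snd, Prod.fst_add, Prod.snd_add,
    smul_eq_mul] <;> ring

/-- The linear map of the plane with columns `u` and `n`. -/
def columns (u n : ℝ × ℝ) : ℝ × ℝ →L[ℝ] ℝ × ℝ :=
  (ContinuousLinearMap.fst ℝ ℝ ℝ).smulRight u + (ContinuousLinearMap.snd ℝ ℝ ℝ).smulRight n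

@[simp]
theorem columns_apply (u n q : ℝ × ℝ) : columns u n q = q.1 • u + q.2 • n := rfl

theorem det_columns (u n : ℝ × ℝ) : (columns u n).det = wedge u n := by
  rw [ContinuousLinearMap.det, ← LinearMap.det_toMatrix (Module.Basis.finTwoProd ℝ),
    Matrix.det_fin_two]
  simp [LinearMap.toMatrix_apply, wedge]
  ring

/-- Coordinates near the curve `γ`, obtained by sliding it in the fixed transverse direction `n`;
using a constant `n` keeps the map `C¹` when `γ` is. -/
def collar (γ : ℝ → ℝ × ℝ) (n q : ℝ × ℝ) : ℝ × ℝ := γ q.1 + q.2 • n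

@[simp]
theorem collar_zero (γ : ℝ → ℝ × ℝ) (n : ℝ × ℝ) (t : ℝ) : collar γ n (t, 0) = γ t := by
  simp [collar]

theorem contDiff_collar {γ : ℝ → ℝ × ℝ} (hγ : ContDiff ℝ 1 γ) (n : ℝ × ℝ) :
    ContDiff ℝ 1 (collar γ n) := by
  unfold collar
  fun_prop

theorem hasFDerivAt_collar {γ : ℝ → ℝ × ℝ} {q : ℝ × ℝ} (hγ : DifferentiableAt ℝ γ q.1)
    (n : ℝ × ℝ) : HasFDerivAt (collar γ n) (columns (deriv γ q.1) n) q := by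
  have hcurve : HasFDerivAt (fun q : ℝ × ℝ => γ q.1) _ q :=
    hγ.hasDerivAt.hasFDerivAt.comp q hasFDerivAt_fst
  refine (hcurve.add (hasFDerivAt_snd.smul_const n)).congr_fderiv ?_
  ext1 <;> ext <;> simp

theorem setIntegral_Ioo_prod_Ioo_fderiv_fst {f : ℝ × ℝ → ℝ} (hf : ContDiff ℝ 1 f)
    {a b c d : ℝ} (hab : a ≤ b) (ha : ∀ s ∈ Ioo c d, f (a, s) = 0)
    (hb : ∀ s ∈ Ioo c d, f (b, s) = 0) :
    ∫ p in Ioo a b ×ˢ Ioo c d, fderiv ℝ f p (1, 0) = 0 := by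
  have hcont : Continuous fun p => fderiv ℝ f p (1, 0) :=
    (hf.continuous_fderiv one_ne_zero).clm_apply continuous_const
  have hint : IntegrableOn _ (Ioo a b ×ˢ Ioo c d) :=
    integrableOn_of_continuous_of_isBounded hcont
      ((Metric.isBounded_Ioo a b).prod (Metric.isBounded_Ioo c d))
  rw [Measure.volume_eq_prod, IntegrableOn, ← Measure.prod_restrict] at hint
  rw [Measure.volume_eq_prod, ← Measure.prod_restrict, integral_prod_symm _ hint]
  refine setIntegral_eq_zero_of_forall_eq_zero fun s hs => ?_
  have hderiv (t : ℝ) : HasDerivAt (fun t => f (t, s)) (fderiv ℝ f (t, s) (1, 0)) t :=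
    (hf.differentiable one_ne_zero (t, s)).hasFDerivAt.comp_hasDerivAt t
      ((hasDerivAt_id t).prodMk (hasDerivAt_const t s))
  rw [← integral_Ioc_eq_integral_Ioo, ← intervalIntegral.integral_of_le hab,
    intervalIntegral.integral_eq_sub_of_hasDerivAt (fun t _ => hderiv t)
      (Continuous.intervalIntegrable (by fun_prop) _ _), ha s hs, hb s hs, sub_zero]

theorem setIntegral_Ioo_prod_Ioo_mul_fderiv_snd {f : ℝ × ℝ → ℝ} (hf : ContDiff ℝ 1 f)
    {w : ℝ → ℝ} (hw : Continuous w) {a b c d : ℝ} (hab : a ≤ b) (hcd : c ≤ d) :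
    ∫ p in Ioo a b ×ˢ Ioo c d, w p.1 * fderiv ℝ f p (0, 1) =
      ∫ t in a..b, w t * (f (t, d) - f (t, c)) := by
  have hcont : Continuous fun p => fderiv ℝ f p (0, 1) :=
    (hf.continuous_fderiv one_ne_zero).clm_apply continuous_const
  have hint : IntegrableOn (fun p => w p.1 * fderiv ℝ f p (0, 1)) (Ioo a b ×ˢ Ioo c d) :=
    integrableOn_of_continuous_of_isBounded (by fun_prop)
      ((Metric.isBounded_Ioo a b).prod (Metric.isBounded_Ioo c d))
  rw [Measure.volume_eq_prod] at hint ⊢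
  rw [setIntegral_prod _ hint, intervalIntegral.integral_of_le hab, integral_Ioc_eq_integral_Ioo]
  refine setIntegral_congr_fun measurableSet_Ioo fun t _ => ?_
  have hderiv (s : ℝ) : HasDerivAt (fun s => f (t, s)) (fderiv ℝ f (t, s) (0, 1)) s :=
    (hf.differentiable one_ne_zero (t, s)).hasFDerivAt.comp_hasDerivAt s
      ((hasDerivAt_const s t).prodMk (hasDerivAt_id s))
  simp only [integral_const_mul]
  rw [← integral_Ioc_eq_integral_Ioo, ← intervalIntegral.integral_of_le hcd,
    intervalIntegral.integral_eq_sub_of_hasDerivAt (fun s _ => hderiv s)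
      ((hcont.comp (by fun_prop : Continuous fun s : ℝ => (t, s))).intervalIntegrable _ _)]

theorem setIntegral_image_collar {γ : ℝ → ℝ × ℝ} (hγ : ContDiff ℝ 1 γ) {n : ℝ × ℝ}
    {a b c d : ℝ} (hab : a ≤ b) (hcd : c ≤ d)
    (hinj : InjOn (collar γ n) (Ioo a b ×ˢ Ioo c d))
    (hpos : ∀ t ∈ Ioo a b, 0 < wedge (deriv γ t) n)
    {φ : ℝ × ℝ → ℝ} (hφ : ContDiff ℝ 1 φ) (ha : ∀ s ∈ Ioo c d, φ (collar γ n (a, s)) = 0)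
    (hb : ∀ s ∈ Ioo c d, φ (collar γ n (b, s)) = 0) (v : ℝ × ℝ) :
    ∫ x in collar γ n '' (Ioo a b ×ˢ Ioo c d), fderiv ℝ φ x v =
      ∫ t in a..b, wedge (deriv γ t) v * (φ (collar γ n (t, d)) - φ (collar γ n (t, c))) := by
  set f : ℝ × ℝ → ℝ := φ ∘ collar γ n
  have hf : ContDiff ℝ 1 f := hφ.comp (contDiff_collar hγ n)
  have hwedge : Continuous fun t => wedge (deriv γ t) v :=
    continuous_wedge (hγ.continuous_deriv le_rfl) continuous_const
  have hcollar (q : ℝ × ℝ) : HasFDerivAt (collar γ n) (columns (deriv γ q.1) n) q :=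
    hasFDerivAt_collar (hγ.differentiable one_ne_zero q.1) n
  have hfderiv (q w : ℝ × ℝ) :
      fderiv ℝ f q w = fderiv ℝ φ (collar γ n q) (columns (deriv γ q.1) n w) := by
    rw [((hφ.differentiable one_ne_zero _).hasFDerivAt.comp q (hcollar q)).fderiv]
    rfl
  have hpullback (q : ℝ × ℝ) (hq : q ∈ Ioo a b ×ˢ Ioo c d) :
      |(columns (deriv γ q.1) n).det| • fderiv ℝ φ (collar γ n q) v =
        wedge v n * fderiv ℝ f q (1, 0) + wedge (deriv γ q.1) v * fderiv ℝ f q (0, 1) := by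
    rw [det_columns, abs_of_pos (hpos q.1 hq.1), ← map_smul, wedge_smul_eq]
    simp [hfderiv]
  have hint {w : ℝ × ℝ → ℝ} (hw : Continuous w) (e : ℝ × ℝ) :
      IntegrableOn (fun q => w q * fderiv ℝ f q e) (Ioo a b ×ˢ Ioo c d) :=
    integrableOn_of_continuous_of_isBounded
      (hw.mul ((hf.continuous_fderiv one_ne_zero).clm_apply continuous_const))
      ((Metric.isBounded_Ioo a b).prod (Metric.isBounded_Ioo c d))
  have hmeas : MeasurableSet (Ioo a b ×ˢ Ioo c d) := measurableSet_Ioo.prod measurableSet_Ioo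
  rw [integral_image_eq_integral_abs_det_fderiv_smul volume hmeas
      (fun q _ => (hcollar q).hasFDerivWithinAt) hinj,
    setIntegral_congr_fun hmeas hpullback,
    integral_add (hint continuous_const _)
      (hint (w := fun q => wedge (deriv γ q.1) v) (hwedge.comp continuous_fst) _),
    integral_const_mul, setIntegral_Ioo_prod_Ioo_fderiv_fst hf hab ha hb, mul_zero, zero_add,
    setIntegral_Ioo_prod_Ioo_mul_fderiv_snd hf hwedge hab hcd]
  rfl

/-- A `C¹` simple closed curve, parametrised over `[0, T]` with nonvanishing velocity. The one-sided
tangents at the base point `γ 0 = γ T` need not agree, so a corner or cusp is allowed there. -/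
structure IsRegularLoop {E : Type*} [NormedAddCommGroup E] [NormedSpace ℝ E]
    (γ : ℝ → E) (T : ℝ) : Prop where
  contDiff : ContDiff ℝ 1 γ
  closed : γ 0 = γ T
  injOn : InjOn γ (Ico 0 T)
  deriv_ne_zero : ∀ t ∈ Icc 0 T, deriv γ t ≠ 0

namespace IsRegularLoop

variable {E : Type*} [NormedAddCommGroup E] [NormedSpace ℝ E] {γ : ℝ → E} {T : ℝ}

theorem eq_of_apply_eq (hγ : IsRegularLoop γ T) {s t : ℝ} (hs : s ∈ Icc 0 T) (ht : t ∈ Ioo 0 T)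
    (h : γ s = γ t) : s = t := by
  rcases hs.2.lt_or_eq with hsT | rfl
  · exact hγ.injOn ⟨hs.1, hsT⟩ ⟨ht.1.le, ht.2⟩ h
  · exact absurd (hγ.injOn ⟨le_rfl, ht.1.trans ht.2⟩ ⟨ht.1.le, ht.2⟩ (hγ.closed.trans h)) ht.1.ne

theorem injOn_Ioc (hγ : IsRegularLoop γ T) : InjOn γ (Ioc 0 T) := fun s hs t ht h => by
  rcases ht.2.lt_or_eq with htT | rfl
  · exact hγ.eq_of_apply_eq (Ioc_subset_Icc_self hs) ⟨ht.1, htT⟩ h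
  rcases hs.2.lt_or_eq with hsT | rfl
  · exact (hγ.eq_of_apply_eq (Ioc_subset_Icc_self ht) ⟨hs.1, hsT⟩ h.symm).symm
  · rfl

theorem continuous_deriv (hγ : IsRegularLoop γ T) : Continuous (deriv γ) :=
  hγ.contDiff.continuous_deriv le_rfl

end IsRegularLoop

/-- The square of half-width `r` around `(t₀, 0)` is a collar coordinate patch for `γ`: on it
`collar γ n` is injective and positively oriented, and meets the curve only along the axis. -/
structure IsCollar (γ : ℝ → ℝ × ℝ) (T : ℝ) (n : ℝ × ℝ) (t₀ r : ℝ) : Prop where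
  pos : 0 < r
  mem_Ioo : ∀ t ∈ Icc (t₀ - r) (t₀ + r), t ∈ Ioo 0 T
  wedge_pos : ∀ t ∈ Icc (t₀ - r) (t₀ + r), 0 < wedge (deriv γ t) n
  injOn : InjOn (collar γ n) (Icc (t₀ - r) (t₀ + r) ×ˢ Icc (-r) r)
  isOpen_image : IsOpen (collar γ n '' (Ioo (t₀ - r) (t₀ + r) ×ˢ Ioo (-r) r))
  eq_of_apply_eq : ∀ q ∈ Icc (t₀ - r) (t₀ + r) ×ˢ Icc (-r) r, ∀ t ∈ Icc 0 T,
    γ t = collar γ n q → (t, 0) = q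

theorem exists_wedge_pos {u : ℝ × ℝ} (hu : u ≠ 0) : ∃ n, 0 < wedge u n := by
  refine ⟨(-u.2, u.1), ?_⟩
  have hsq : wedge u (-u.2, u.1) = u.1 ^ 2 + u.2 ^ 2 := by simp only [wedge]; ring
  rw [hsq]
  by_contra! h
  exact hu (Prod.ext (by rw [Prod.fst_zero]; nlinarith) (by rw [Prod.snd_zero]; nlinarith))

theorem exists_openPartialHomeomorph_eq_collar {γ : ℝ → ℝ × ℝ} (hγ : ContDiff ℝ 1 γ) {n : ℝ × ℝ}
    {t₀ : ℝ} (hn : 0 < wedge (deriv γ t₀) n) :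
    ∃ e : OpenPartialHomeomorph (ℝ × ℝ) (ℝ × ℝ), ⇑e = collar γ n ∧ (t₀, 0) ∈ e.source := by
  have hdet : (columns (deriv γ t₀) n).det ≠ 0 := by rw [det_columns]; exact hn.ne'
  have hderiv : HasFDerivAt (collar γ n) (columns (deriv γ t₀) n) (t₀, 0) :=
    hasFDerivAt_collar (q := (t₀, 0)) (hγ.differentiable one_ne_zero t₀) n
  have hstrict := (contDiff_collar hγ n).contDiffAt.hasStrictFDerivAt' hderiv one_ne_zero
  rw [← ContinuousLinearMap.coe_toContinuousLinearEquivOfDetNeZero _ hdet] at hstrict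
  exact ⟨hstrict.toOpenPartialHomeomorph _, hstrict.toOpenPartialHomeomorph_coe,
    hstrict.mem_toOpenPartialHomeomorph_source⟩

theorem IsRegularLoop.exists_isCollar {γ : ℝ → ℝ × ℝ} {T t₀ : ℝ} (hγ : IsRegularLoop γ T)
    (ht₀ : t₀ ∈ Ioo 0 T) : ∃ n r, IsCollar γ T n t₀ r := by
  obtain ⟨n, hn⟩ := exists_wedge_pos (hγ.deriv_ne_zero t₀ (Ioo_subset_Icc_self ht₀))
  obtain ⟨e, he, hsource⟩ := exists_openPartialHomeomorph_eq_collar hγ.contDiff hn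
  have heinj : InjOn (collar γ n) e.source := he ▸ e.injOn
  have hfar : ∀ᶠ q in 𝓝 ((t₀, 0) : ℝ × ℝ), ∀ t ∈ Icc 0 T,
      γ t = collar γ n q → (t, (0 : ℝ)) ∈ e.source := by
    have htendsto := (contDiff_collar hγ.contDiff n).continuous.tendsto (t₀, 0)
    refine htendsto.eventually (eventually_forall_eq_imp_mem
      hγ.contDiff.continuous.continuousOn isCompact_Icc
      (e.open_source.preimage (by fun_prop : Continuous fun t : ℝ => (t, (0 : ℝ))))
      fun t ht h => ?_)
    rwa [hγ.eq_of_apply_eq ht ht₀ (h.trans (collar_zero γ n t₀))]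
  have hpos : ∀ᶠ q in 𝓝 ((t₀, 0) : ℝ × ℝ), 0 < wedge (deriv γ q.1) n :=
    (isOpen_lt continuous_const (continuous_wedge (hγ.continuous_deriv.comp continuous_fst)
      continuous_const)).mem_nhds hn
  have hmem : ∀ᶠ q in 𝓝 ((t₀, 0) : ℝ × ℝ), q.1 ∈ Ioo 0 T :=
    (isOpen_Ioo.preimage continuous_fst).mem_nhds ht₀
  obtain ⟨r, hr, hball⟩ := Metric.nhds_basis_closedBall.eventually_iff.1
    ((e.open_source.eventually_mem hsource).and (hfar.and (hpos.and hmem)))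
  have hbox : Metric.closedBall ((t₀, 0) : ℝ × ℝ) r = Icc (t₀ - r) (t₀ + r) ×ˢ Icc (-r) r := by
    rw [← closedBall_prod_same, Real.closedBall_eq_Icc, Real.closedBall_eq_Icc, zero_sub, zero_add]
  rw [hbox] at hball
  have haxis {t : ℝ} (ht : t ∈ Icc (t₀ - r) (t₀ + r)) :
      (t, (0 : ℝ)) ∈ Icc (t₀ - r) (t₀ + r) ×ˢ Icc (-r) r := ⟨ht, by simp [hr.le]⟩
  refine ⟨n, r, hr, fun t ht => (hball (haxis ht)).2.2.2, fun t ht => (hball (haxis ht)).2.2.1,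
    heinj.mono fun q hq => (hball hq).1, he ▸ ?_, fun q hq t ht h =>
      heinj ((hball hq).2.1 t ht h) (hball hq).1 (by rw [collar_zero, h])⟩
  exact e.isOpen_image_of_subset_source (isOpen_Ioo.prod isOpen_Ioo) fun q hq =>
    (hball (prod_mono Ioo_subset_Icc_self Ioo_subset_Icc_self hq)).1

/-- Green's formula for the curve `γ` and the region `Ω`, with orientation sign `j`, tested on
functions supported in `U`. -/
def GreenOn (γ : ℝ → ℝ × ℝ) (T : ℝ) (Ω : Set (ℝ × ℝ)) (j : ℝ) (U : Set (ℝ × ℝ)) : Prop :=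
  ∀ φ : ℝ × ℝ → ℝ, ContDiff ℝ 1 φ → tsupport φ ⊆ U → ∀ v,
    ∫ x in Ω, fderiv ℝ φ x v = j * ∫ t in 0..T, φ (γ t) * wedge (deriv γ t) v

theorem fderiv_apply_eq_zero_of_notMem_tsupport {E F : Type*} [NormedAddCommGroup E]
    [NormedSpace ℝ E] [NormedAddCommGroup F] [NormedSpace ℝ F] {f : E → F} {x : E}
    (hx : x ∉ tsupport f) (v : E) : fderiv ℝ f x v = 0 := by
  rw [image_eq_zero_of_notMem_tsupport fun h => hx (tsupport_fderiv_subset ℝ h),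
    _root_.zero_apply]

theorem integrableOn_fderiv_apply {E : Type*} [NormedAddCommGroup E] [NormedSpace ℝ E]
    [FiniteDimensional ℝ E] [MeasurableSpace E] [BorelSpace E] {μ : Measure E}
    [IsFiniteMeasureOnCompacts μ] {f : E → ℝ} (hf : ContDiff ℝ 1 f) {Ω : Set E}
    (hΩ : Bornology.IsBounded Ω) (v : E) : IntegrableOn (fun x => fderiv ℝ f x v) Ω μ :=
  integrableOn_of_continuous_of_isBounded
    ((hf.continuous_fderiv one_ne_zero).clm_apply continuous_const) hΩ

theorem integral_fderiv_apply_eq_zero {E : Type*} [NormedAddCommGroup E] [NormedSpace ℝ E]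
    [FiniteDimensional ℝ E] [MeasurableSpace E] [BorelSpace E] {μ : Measure E}
    [μ.IsAddHaarMeasure] {f : E → ℝ} (hf : ContDiff ℝ 1 f) (hc : HasCompactSupport f) (v : E) :
    ∫ x, fderiv ℝ f x v ∂μ = 0 := by
  have hparts := integral_mul_fderiv_eq_neg_fderiv_mul_of_integrable (μ := μ)
    (f := fun _ => (1 : ℝ)) (g := f) (v := v) (by simp)
    (by simpa using ((hf.continuous_fderiv one_ne_zero).clm_apply
      continuous_const).integrable_of_hasCompactSupport (hc.fderiv_apply ℝ v))
    (by simpa using hf.continuous.integrable_of_hasCompactSupport hc)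
    (fun _ _ => by fun_prop) fun x _ => hf.differentiable one_ne_zero x
  simpa using hparts

section Green

variable {γ : ℝ → ℝ × ℝ} {T j : ℝ} {Ω U V : Set (ℝ × ℝ)}

theorem GreenOn.mono (hV : GreenOn γ T Ω j V) (hUV : U ⊆ V) : GreenOn γ T Ω j U :=
  fun φ hφ hφU => hV φ hφ (hφU.trans hUV)

theorem GreenOn.union (hγ : ContDiff ℝ 1 γ) (hΩb : Bornology.IsBounded Ω)
    (hUo : IsOpen U) (hVo : IsOpen V) (hU : GreenOn γ T Ω j U) (hV : GreenOn γ T Ω j V) :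
    GreenOn γ T Ω j (U ∪ V) := by
  intro φ hφ hφUV v
  obtain ⟨f, g, hf, hg, hfU, hgV, rfl⟩ :=
    exists_contDiff_add_tsupport_subset (n := 1) hφ hUo hVo hφUV
  have hline {h : ℝ × ℝ → ℝ} (hh : ContDiff ℝ 1 h) :
      IntervalIntegrable (fun t => h (γ t) * wedge (deriv γ t) v) volume 0 T :=
    ((hh.continuous.comp hγ.continuous).mul
      (continuous_wedge (hγ.continuous_deriv le_rfl) continuous_const)).intervalIntegrable _ _
  have hfderiv (x : ℝ × ℝ) : fderiv ℝ (f + g) x v = fderiv ℝ f x v + fderiv ℝ g x v := by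
    rw [fderiv_add (hf.differentiable one_ne_zero x) (hg.differentiable one_ne_zero x),
      _root_.add_apply]
  simp_rw [hfderiv, Pi.add_apply, add_mul]
  rw [integral_add (integrableOn_fderiv_apply hf hΩb v) (integrableOn_fderiv_apply hg hΩb v),
    intervalIntegral.integral_add (hline hf) (hline hg), hU f hf hfU v, hV g hg hgV v, mul_add]

theorem greenOn_compl_frontier (hγ : ContDiff ℝ 1 γ) (hT : 0 ≤ T) (hΩo : IsOpen Ω)
    (hΩb : Bornology.IsBounded Ω) (hfr : frontier Ω = γ '' Icc 0 T) :
    GreenOn γ T Ω j (frontier Ω)ᶜ := by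
  have hline {φ : ℝ × ℝ → ℝ} (hφ : tsupport φ ⊆ (frontier Ω)ᶜ) (v : ℝ × ℝ) :
      ∫ t in 0..T, φ (γ t) * wedge (deriv γ t) v = 0 := by
    refine intervalIntegral.integral_zero_ae (Eventually.of_forall fun t ht => ?_)
    have hmem : γ t ∈ frontier Ω :=
      hfr ▸ mem_image_of_mem γ (Ioc_subset_Icc_self (uIoc_of_le hT ▸ ht))
    rw [image_eq_zero_of_notMem_tsupport fun h => hφ h hmem, zero_mul]
  have hcover : (frontier Ω)ᶜ = Ω ∪ (closure Ω)ᶜ := by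
    rw [hΩo.frontier_eq, sdiff_eq, compl_inter, compl_compl, union_comm]
  have hdisj : Ω ⊆ (frontier Ω)ᶜ := hcover ▸ subset_union_left
  rw [hcover]
  refine .union hγ hΩb hΩo isClosed_closure.isOpen_compl (fun φ hφ hφΩ v => ?_)
    fun φ _ hφΩ v => ?_
  · rw [hline (hφΩ.trans hdisj), setIntegral_eq_integral_of_forall_compl_eq_zero fun x hx =>
      fderiv_apply_eq_zero_of_notMem_tsupport (fun h => hx (hφΩ h)) v, mul_zero]
    exact integral_fderiv_apply_eq_zero hφ (HasCompactSupport.of_support_subset_isCompact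
      hΩb.isCompact_closure ((subset_tsupport φ).trans (hφΩ.trans subset_closure))) v
  · rw [hline (hφΩ.trans (compl_subset_compl.2 frontier_subset_closure)), mul_zero]
    exact setIntegral_eq_zero_of_forall_eq_zero fun x hx =>
      fderiv_apply_eq_zero_of_notMem_tsupport (fun h => hφΩ h (subset_closure hx)) v

theorem greenOn_of_locally (hγ : ContDiff ℝ 1 γ) (hT : 0 ≤ T) (hΩo : IsOpen Ω)
    (hΩb : Bornology.IsBounded Ω) (hfr : frontier Ω = γ '' Icc 0 T)
    (hloc : ∀ p ∈ frontier Ω ∩ V, ∃ U ∈ 𝓝 p, GreenOn γ T Ω j U) : GreenOn γ T Ω j V := by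
  intro φ hφ hφV
  have hcompact : IsCompact (frontier Ω ∩ tsupport φ) :=
    (hΩb.isCompact_closure.of_isClosed_subset isClosed_frontier
      frontier_subset_closure).inter_right (isClosed_tsupport φ)
  obtain ⟨U, hUo, hU, hgreen⟩ : ∃ U, IsOpen U ∧ frontier Ω ∩ tsupport φ ⊆ U ∧
      GreenOn γ T Ω j U := by
    refine hcompact.induction_on
      ⟨∅, isOpen_empty, Subset.rfl,
        (greenOn_compl_frontier hγ hT hΩo hΩb hfr).mono (empty_subset _)⟩
      (fun s t hst ⟨U, hUo, htU, hU⟩ => ⟨U, hUo, hst.trans htU, hU⟩)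
      (fun s t ⟨U, hUo, hsU, hU⟩ ⟨V, hVo, htV, hV⟩ =>
        ⟨U ∪ V, hUo.union hVo, union_subset_union hsU htV, .union hγ hΩb hUo hVo hU hV⟩)
      fun p hp => ?_
    obtain ⟨U, hU, hgreen⟩ := hloc p ⟨hp.1, hφV hp.2⟩
    exact ⟨interior U, mem_nhdsWithin_of_mem_nhds (interior_mem_nhds.2 hU), interior U,
      isOpen_interior, Subset.rfl, hgreen.mono interior_subset⟩
  refine GreenOn.union hγ hΩb hUo isClosed_frontier.isOpen_compl hgreen
    (greenOn_compl_frontier hγ hT hΩo hΩb hfr) φ hφ fun x hx => ?_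
  by_cases hxfr : x ∈ frontier Ω
  · exact Or.inl (hU ⟨hxfr, hx⟩)
  · exact Or.inr hxfr

end Green

theorem exists_indicator_setIntegral_inter {X : Type*} [TopologicalSpace X] [MeasurableSpace X]
    {μ : Measure X} {S Ω : Set X} (hS : IsPreconnected S) (hd : Disjoint S (frontier Ω))
    (hΩ : IsOpen Ω) :
    ∃ c : ℝ, (c = 0 ∨ c = 1) ∧ ∀ f : X → ℝ, ∫ x in Ω ∩ S, f x ∂μ = c * ∫ x in S, f x ∂μ := by
  rcases subset_or_disjoint_of_disjoint_frontier hS hd hΩ with h | h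
  · exact ⟨1, Or.inr rfl, fun f => by rw [inter_eq_right.2 h, one_mul]⟩
  · exact ⟨0, Or.inl rfl, fun f => by rw [h.symm.inter_eq, setIntegral_empty, zero_mul]⟩

namespace IsCollar

variable {γ : ℝ → ℝ × ℝ} {T t₀ r : ℝ} {n : ℝ × ℝ} {φ : ℝ × ℝ → ℝ}

theorem comp_collar_eq_zero (hc : IsCollar γ T n t₀ r)
    (hφ : tsupport φ ⊆ collar γ n '' (Ioo (t₀ - r) (t₀ + r) ×ˢ Ioo (-r) r)) {q : ℝ × ℝ}
    (hq : q ∈ Icc (t₀ - r) (t₀ + r) ×ˢ Icc (-r) r)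
    (hq' : q ∉ Ioo (t₀ - r) (t₀ + r) ×ˢ Ioo (-r) r) : φ (collar γ n q) = 0 := by
  refine image_eq_zero_of_notMem_tsupport fun h => hq' ?_
  obtain ⟨p, hp, hpq⟩ := hφ h
  rwa [← hc.injOn (prod_mono Ioo_subset_Icc_self Ioo_subset_Icc_self hp) hq hpq]

theorem integral_comp_mul_wedge (hc : IsCollar γ T n t₀ r)
    (hφ : tsupport φ ⊆ collar γ n '' (Ioo (t₀ - r) (t₀ + r) ×ˢ Ioo (-r) r)) (v : ℝ × ℝ) :
    ∫ t in 0..T, φ (γ t) * wedge (deriv γ t) v =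
      ∫ t in (t₀ - r)..(t₀ + r), φ (γ t) * wedge (deriv γ t) v := by
  have hle : t₀ - r ≤ t₀ + r := by linarith [hc.pos]
  have h₀ := hc.mem_Ioo _ (left_mem_Icc.2 hle)
  have h₁ := hc.mem_Ioo _ (right_mem_Icc.2 hle)
  rw [intervalIntegral.integral_of_le (h₀.1.trans h₀.2).le, intervalIntegral.integral_of_le hle]
  refine setIntegral_eq_of_subset_of_forall_sdiff_eq_zero measurableSet_Ioc
    (Ioc_subset_Ioc h₀.1.le h₁.2.le) fun t ht => ?_
  suffices γ t ∉ tsupport φ by rw [image_eq_zero_of_notMem_tsupport this, zero_mul]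
  intro h
  obtain ⟨q, hq, hqt⟩ := hφ h
  have hq' := hc.eq_of_apply_eq q (prod_mono Ioo_subset_Icc_self Ioo_subset_Icc_self hq) t
    (Ioc_subset_Icc_self ht.1) hqt.symm
  exact ht.2 (Ioo_subset_Ioc_self (hq' ▸ hq).1)

theorem setIntegral_image_fderiv (hc : IsCollar γ T n t₀ r) (hγ : ContDiff ℝ 1 γ)
    (hφ : ContDiff ℝ 1 φ)
    (hφU : tsupport φ ⊆ collar γ n '' (Ioo (t₀ - r) (t₀ + r) ×ˢ Ioo (-r) r))
    {c d : ℝ} (hcd : c ≤ d) (hrc : -r ≤ c) (hdr : d ≤ r) (v : ℝ × ℝ) :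
    ∫ x in collar γ n '' (Ioo (t₀ - r) (t₀ + r) ×ˢ Ioo c d), fderiv ℝ φ x v =
      ∫ t in (t₀ - r)..(t₀ + r),
        wedge (deriv γ t) v * (φ (collar γ n (t, d)) - φ (collar γ n (t, c))) := by
  have hle : t₀ - r ≤ t₀ + r := by linarith [hc.pos]
  have hsub : Ioo c d ⊆ Icc (-r) r := Ioo_subset_Icc_self.trans (Icc_subset_Icc hrc hdr)
  exact setIntegral_image_collar hγ hle hcd
    (hc.injOn.mono (prod_mono Ioo_subset_Icc_self hsub))
    (fun t ht => hc.wedge_pos t (Ioo_subset_Icc_self ht)) hφ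
    (fun s hs => hc.comp_collar_eq_zero hφU ⟨left_mem_Icc.2 hle, hsub hs⟩
      fun h => h.1.1.false)
    (fun s hs => hc.comp_collar_eq_zero hφU ⟨right_mem_Icc.2 hle, hsub hs⟩
      fun h => h.1.2.false) v

theorem setIntegral_image_upper (hc : IsCollar γ T n t₀ r) (hγ : ContDiff ℝ 1 γ)
    (hφ : ContDiff ℝ 1 φ)
    (hφU : tsupport φ ⊆ collar γ n '' (Ioo (t₀ - r) (t₀ + r) ×ˢ Ioo (-r) r)) (v : ℝ × ℝ) :
    ∫ x in collar γ n '' (Ioo (t₀ - r) (t₀ + r) ×ˢ Ioo 0 r), fderiv ℝ φ x v =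
      -∫ t in 0..T, φ (γ t) * wedge (deriv γ t) v := by
  rw [hc.setIntegral_image_fderiv hγ hφ hφU hc.pos.le (by linarith [hc.pos]) le_rfl,
    hc.integral_comp_mul_wedge hφU, ← intervalIntegral.integral_neg]
  refine intervalIntegral.integral_congr fun t ht => ?_
  rw [uIcc_of_le (by linarith [hc.pos])] at ht
  have hr : φ (collar γ n (t, r)) = 0 := hc.comp_collar_eq_zero hφU
    ⟨ht, right_mem_Icc.2 (by linarith [hc.pos])⟩ fun h => h.2.2.false
  simp only [hr, collar_zero]
  ring

theorem setIntegral_image_lower (hc : IsCollar γ T n t₀ r) (hγ : ContDiff ℝ 1 γ)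
    (hφ : ContDiff ℝ 1 φ)
    (hφU : tsupport φ ⊆ collar γ n '' (Ioo (t₀ - r) (t₀ + r) ×ˢ Ioo (-r) r)) (v : ℝ × ℝ) :
    ∫ x in collar γ n '' (Ioo (t₀ - r) (t₀ + r) ×ˢ Ioo (-r) 0), fderiv ℝ φ x v =
      ∫ t in 0..T, φ (γ t) * wedge (deriv γ t) v := by
  rw [hc.setIntegral_image_fderiv hγ hφ hφU (by linarith [hc.pos]) le_rfl hc.pos.le,
    hc.integral_comp_mul_wedge hφU]
  refine intervalIntegral.integral_congr fun t ht => ?_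
  rw [uIcc_of_le (by linarith [hc.pos])] at ht
  have hr : φ (collar γ n (t, -r)) = 0 := hc.comp_collar_eq_zero hφU
    ⟨ht, left_mem_Icc.2 (by linarith [hc.pos])⟩ fun h => h.2.1.false
  simp only [hr, collar_zero]
  ring

theorem disjoint_image (hc : IsCollar γ T n t₀ r) {J : Set ℝ} (hJ : J ⊆ Icc (-r) r)
    (h0 : (0 : ℝ) ∉ J) :
    Disjoint (collar γ n '' (Ioo (t₀ - r) (t₀ + r) ×ˢ J)) (γ '' Icc 0 T) := by
  rw [disjoint_left]
  rintro _ ⟨q, hq, rfl⟩ ⟨t, ht, h⟩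
  have hqt := hc.eq_of_apply_eq q (prod_mono Ioo_subset_Icc_self hJ hq) t ht h
  exact h0 (by simpa [← hqt] using hq.2)

theorem inter_image_eq (hc : IsCollar γ T n t₀ r) {Ω : Set (ℝ × ℝ)}
    (hΩ : Disjoint Ω (γ '' Icc 0 T)) :
    Ω ∩ collar γ n '' (Ioo (t₀ - r) (t₀ + r) ×ˢ Ioo (-r) r) =
      Ω ∩ collar γ n '' (Ioo (t₀ - r) (t₀ + r) ×ˢ Ioo (-r) 0) ∪
        Ω ∩ collar γ n '' (Ioo (t₀ - r) (t₀ + r) ×ˢ Ioo 0 r) := by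
  have hr := hc.pos
  refine Subset.antisymm ?_ (union_subset
    (inter_subset_inter_right _ (image_mono (prod_mono le_rfl (Ioo_subset_Ioo_right hr.le))))
    (inter_subset_inter_right _ (image_mono (prod_mono le_rfl
      (Ioo_subset_Ioo_left (neg_nonpos.2 hr.le))))))
  rintro _ ⟨hx, ⟨t, s⟩, ⟨ht, hs⟩, rfl⟩
  rcases lt_trichotomy s 0 with h | rfl | h
  · exact Or.inl ⟨hx, (t, s), ⟨ht, hs.1, h⟩, rfl⟩
  · rw [collar_zero] at hx
    exact absurd (mem_image_of_mem γ
      (Ioo_subset_Icc_self (hc.mem_Ioo t (Ioo_subset_Icc_self ht)))) (disjoint_left.1 hΩ hx)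
  · exact Or.inr ⟨hx, (t, s), ⟨ht, h, hs.2⟩, rfl⟩

theorem setIntegral_fderiv (hc : IsCollar γ T n t₀ r) (hγ : ContDiff ℝ 1 γ)
    {Ω : Set (ℝ × ℝ)} (hΩm : MeasurableSet Ω) (hΩb : Bornology.IsBounded Ω)
    (hΩ : Disjoint Ω (γ '' Icc 0 T)) (hφ : ContDiff ℝ 1 φ)
    (hφU : tsupport φ ⊆ collar γ n '' (Ioo (t₀ - r) (t₀ + r) ×ˢ Ioo (-r) r)) (v : ℝ × ℝ) :
    ∫ x in Ω, fderiv ℝ φ x v =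
      (∫ x in Ω ∩ collar γ n '' (Ioo (t₀ - r) (t₀ + r) ×ˢ Ioo (-r) 0), fderiv ℝ φ x v) +
        ∫ x in Ω ∩ collar γ n '' (Ioo (t₀ - r) (t₀ + r) ×ˢ Ioo 0 r), fderiv ℝ φ x v := by
  have hupper : Ioo (t₀ - r) (t₀ + r) ×ˢ Ioo 0 r ⊆ Icc (t₀ - r) (t₀ + r) ×ˢ Icc (-r) r :=
    prod_mono Ioo_subset_Icc_self
      (Ioo_subset_Icc_self.trans (Icc_subset_Icc_left (neg_nonpos.2 hc.pos.le)))
  have hlower : Ioo (t₀ - r) (t₀ + r) ×ˢ Ioo (-r) 0 ⊆ Icc (t₀ - r) (t₀ + r) ×ˢ Icc (-r) r :=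
    prod_mono Ioo_subset_Icc_self (Ioo_subset_Icc_self.trans (Icc_subset_Icc_right hc.pos.le))
  have hmeas : MeasurableSet (collar γ n '' (Ioo (t₀ - r) (t₀ + r) ×ˢ Ioo 0 r)) :=
    (measurableSet_Ioo.prod measurableSet_Ioo).image_of_continuousOn_injOn
      (contDiff_collar hγ n).continuous.continuousOn (hc.injOn.mono hupper)
  have hdisj : Disjoint (collar γ n '' (Ioo (t₀ - r) (t₀ + r) ×ˢ Ioo (-r) 0))
      (collar γ n '' (Ioo (t₀ - r) (t₀ + r) ×ˢ Ioo 0 r)) := by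
    refine Disjoint.image (disjoint_left.2 fun q hq hq' => ?_) hc.injOn hlower hupper
    exact hq.2.2.not_gt hq'.2.1
  have hint {S : Set (ℝ × ℝ)} : IntegrableOn (fun x => fderiv ℝ φ x v) (Ω ∩ S) :=
    integrableOn_fderiv_apply hφ (hΩb.subset inter_subset_left) v
  rw [← setIntegral_union (hdisj.mono inter_subset_right inter_subset_right) (hΩm.inter hmeas)
    hint hint, ← hc.inter_image_eq hΩ]
  refine setIntegral_eq_of_subset_of_forall_sdiff_eq_zero hΩm inter_subset_left fun x hx => ?_
  exact fderiv_apply_eq_zero_of_notMem_tsupport (fun h => hx.2 ⟨hx.1, hφU h⟩) v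

theorem exists_greenOn (hc : IsCollar γ T n t₀ r) (hγ : ContDiff ℝ 1 γ)
    {Ω : Set (ℝ × ℝ)} (hΩo : IsOpen Ω) (hΩb : Bornology.IsBounded Ω)
    (hfr : frontier Ω = γ '' Icc 0 T) :
    ∃ j : SignType,
      GreenOn γ T Ω j (collar γ n '' (Ioo (t₀ - r) (t₀ + r) ×ˢ Ioo (-r) r)) := by
  have hconn {J : Set ℝ} (hJ : IsPreconnected J) :
      IsPreconnected (collar γ n '' (Ioo (t₀ - r) (t₀ + r) ×ˢ J)) :=
    (isPreconnected_Ioo.prod hJ).image _ (contDiff_collar hγ n).continuous.continuousOn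
  have hdisj : Disjoint Ω (γ '' Icc 0 T) :=
    hfr ▸ (disjoint_frontier_iff_isOpen.2 hΩo).symm
  obtain ⟨a, ha, hlower⟩ := exists_indicator_setIntegral_inter (μ := volume)
    (hconn (isPreconnected_Ioo (a := -r) (b := 0))) (hfr ▸ hc.disjoint_image
      (Ioo_subset_Icc_self.trans (Icc_subset_Icc_right hc.pos.le)) fun h => h.2.false) hΩo
  obtain ⟨b, hb, hupper⟩ := exists_indicator_setIntegral_inter (μ := volume)
    (hconn (isPreconnected_Ioo (a := 0) (b := r))) (hfr ▸ hc.disjoint_image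
      (Ioo_subset_Icc_self.trans (Icc_subset_Icc_left (neg_nonpos.2 hc.pos.le)))
      fun h => h.1.false) hΩo
  obtain ⟨j, hj⟩ : ∃ j : SignType, (j : ℝ) = a - b := by
    rcases ha with rfl | rfl <;> rcases hb with rfl | rfl
    exacts [⟨0, by simp⟩, ⟨-1, by simp⟩, ⟨1, by simp⟩, ⟨0, by simp⟩]
  refine ⟨j, fun φ hφ hφU v => ?_⟩
  rw [hc.setIntegral_fderiv hγ hΩo.measurableSet hΩb hdisj hφ hφU, hlower, hupper,
    hc.setIntegral_image_lower hγ hφ hφU, hc.setIntegral_image_upper hγ hφ hφU, hj]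
  ring

end IsCollar

theorem signType_cast_injective : Function.Injective ((↑) : SignType → ℝ) := by
  rintro (_ | _ | _) (_ | _ | _) <;> norm_num

section Sign

variable {γ : ℝ → ℝ × ℝ} {T t₀ : ℝ} {Ω U : Set (ℝ × ℝ)}

theorem IsRegularLoop.exists_integral_pos (hγ : IsRegularLoop γ T) (ht₀ : t₀ ∈ Ioo 0 T)
    (hU : U ∈ 𝓝 (γ t₀)) :
    ∃ φ : ℝ × ℝ → ℝ, ContDiff ℝ 1 φ ∧ tsupport φ ⊆ U ∧
      ∃ v, 0 < ∫ t in 0..T, φ (γ t) * wedge (deriv γ t) v := by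
  obtain ⟨n, r, hc⟩ := hγ.exists_isCollar ht₀
  set W := collar γ n '' (Ioo (t₀ - r) (t₀ + r) ×ˢ Ioo (-r) r)
  have ht₀r : t₀ ∈ Icc (t₀ - r) (t₀ + r) := ⟨by linarith [hc.pos], by linarith [hc.pos]⟩
  have hW : W ∈ 𝓝 (γ t₀) := hc.isOpen_image.mem_nhds
    ⟨(t₀, 0), by simp [hc.pos], collar_zero γ n t₀⟩
  obtain ⟨ε, hε, hball⟩ := Metric.nhds_basis_closedBall.mem_iff.1 (inter_mem hU hW)
  let b : ContDiffBump (γ t₀) := ⟨ε / 2, ε, half_pos hε, half_lt_self hε⟩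
  have hb : tsupport b ⊆ U ∩ W := b.tsupport_eq.trans_subset hball
  have hnonneg (t : ℝ) (ht : t ∈ Ioc 0 T) : 0 ≤ b (γ t) * wedge (deriv γ t) n := by
    by_cases hbt : b (γ t) = 0
    · rw [hbt, zero_mul]
    obtain ⟨q, hq, hqt⟩ := (hb (subset_tsupport _ hbt)).2
    have htq : (t, 0) = q := hc.eq_of_apply_eq q
      (prod_mono Ioo_subset_Icc_self Ioo_subset_Icc_self hq) t (Ioc_subset_Icc_self ht) hqt.symm
    exact mul_nonneg b.nonneg (hc.wedge_pos t (Ioo_subset_Icc_self (htq ▸ hq).1)).le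
  refine ⟨b, b.contDiff, hb.trans inter_subset_left, n,
    intervalIntegral.integral_pos (ht₀.1.trans ht₀.2) ?_ hnonneg
      ⟨t₀, Ioo_subset_Icc_self ht₀, mul_pos (b.pos_of_mem_ball (Metric.mem_ball_self hε))
        (hc.wedge_pos t₀ ht₀r)⟩⟩
  exact ((b.continuous.comp hγ.contDiff.continuous).mul
    (continuous_wedge hγ.continuous_deriv continuous_const)).continuousOn

theorem GreenOn.sign_unique (hγ : IsRegularLoop γ T) (ht₀ : t₀ ∈ Ioo 0 T) (hU : U ∈ 𝓝 (γ t₀))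
    {j k : ℝ} (hj : GreenOn γ T Ω j U) (hk : GreenOn γ T Ω k U) : j = k := by
  obtain ⟨φ, hφ, hφU, v, hpos⟩ := hγ.exists_integral_pos ht₀ hU
  exact mul_right_cancel₀ hpos.ne' ((hj φ hφ hφU v).symm.trans (hk φ hφ hφU v))

theorem IsRegularLoop.exists_greenOn_nhds (hγ : IsRegularLoop γ T) (hΩo : IsOpen Ω)
    (hΩb : Bornology.IsBounded Ω) (hfr : frontier Ω = γ '' Icc 0 T) (ht₀ : t₀ ∈ Ioo 0 T) :
    ∃ j : SignType, ∃ U ∈ 𝓝 (γ t₀), GreenOn γ T Ω j U := by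
  obtain ⟨n, r, hc⟩ := hγ.exists_isCollar ht₀
  obtain ⟨j, hj⟩ := hc.exists_greenOn hγ.contDiff hΩo hΩb hfr
  exact ⟨j, _, hc.isOpen_image.mem_nhds ⟨(t₀, 0), by simp [hc.pos], collar_zero γ n t₀⟩, hj⟩

theorem IsRegularLoop.exists_forall_greenOn_nhds (hγ : IsRegularLoop γ T) (hΩo : IsOpen Ω)
    (hΩb : Bornology.IsBounded Ω) (hfr : frontier Ω = γ '' Icc 0 T) :
    ∃ j : SignType, ∀ t ∈ Ioo 0 T, ∃ U ∈ 𝓝 (γ t), GreenOn γ T Ω j U := by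
  choose! σ U hU hgreen using fun t (ht : t ∈ Ioo 0 T) =>
    hγ.exists_greenOn_nhds hΩo hΩb hfr ht
  have hσ : ContinuousOn σ (Ioo 0 T) := fun t ht => by
    have hnear : ∀ᶠ s in 𝓝[Ioo 0 T] t, U t ∈ 𝓝 (γ s) :=
      (hγ.contDiff.continuous.continuousAt.eventually
        (eventually_mem_nhds_iff.2 (hU t ht))).filter_mono nhdsWithin_le_nhds
    refine tendsto_const_nhds.congr' ?_
    filter_upwards [hnear, self_mem_nhdsWithin] with s hs hsT
    exact signType_cast_injective (GreenOn.sign_unique hγ hsT (inter_mem hs (hU s hsT))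
      ((hgreen t ht).mono inter_subset_left) ((hgreen s hsT).mono inter_subset_right))
  obtain ⟨j, hj⟩ : ∃ j, ∀ t ∈ Ioo 0 T, σ t = j := by
    rcases (Ioo 0 T).eq_empty_or_nonempty with h | ⟨s, hs⟩
    · simp [h]
    · exact ⟨σ s, fun t ht => isPreconnected_Ioo.constant hσ ht hs⟩
  exact ⟨j, fun t ht => ⟨U t, hU t ht, hj t ht ▸ hgreen t ht⟩⟩

theorem IsRegularLoop.exists_greenOn_compl_singleton (hγ : IsRegularLoop γ T) (hT : 0 ≤ T)
    (hΩo : IsOpen Ω) (hΩb : Bornology.IsBounded Ω) (hfr : frontier Ω = γ '' Icc 0 T) :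
    ∃ j : SignType, GreenOn γ T Ω j {γ 0}ᶜ := by
  obtain ⟨j, hj⟩ := hγ.exists_forall_greenOn_nhds hΩo hΩb hfr
  refine ⟨j, greenOn_of_locally hγ.contDiff hT hΩo hΩb hfr fun p hp => ?_⟩
  obtain ⟨t, ht, rfl⟩ := hfr ▸ hp.1
  refine hj t ⟨ht.1.lt_of_ne ?_, ht.2.lt_of_ne ?_⟩ <;> rintro rfl
  · exact hp.2 rfl
  · exact hp.2 hγ.closed.symm

end Sign

section Cutoff

variable {E : Type*} [NormedAddCommGroup E] [NormedSpace ℝ E] [HasContDiffBump E]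

/-- A bump function equal to `1` on the unit ball and supported in the ball of radius `2`. -/
def unitBump (E : Type*) [NormedAddCommGroup E] [NormedSpace ℝ E] : ContDiffBump (0 : E) :=
  ⟨1, 2, one_pos, one_lt_two⟩

/-- A cutoff at scale `1 / a`: it vanishes near `p` and equals `1` at distance `2 / a` from `p`. -/
def cutoff (p : E) (a : ℝ) (x : E) : ℝ := 1 - unitBump E (a • (x - p))

theorem contDiff_cutoff (p : E) (a : ℝ) : ContDiff ℝ 1 (cutoff p a) :=
  contDiff_const.sub ((unitBump E).contDiff.comp (by fun_prop))

theorem norm_cutoff_le_one (p : E) (a : ℝ) (x : E) : ‖cutoff p a x‖ ≤ 1 := by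
  rw [cutoff, Real.norm_of_nonneg (sub_nonneg.2 (unitBump E).le_one)]
  exact sub_le_self _ (unitBump E).nonneg

theorem eventually_cutoff_eq_one {p x : E} (hx : x ≠ p) : ∀ᶠ a in atTop, cutoff p a x = 1 := by
  have hpos : 0 < ‖x - p‖ := norm_pos_iff.2 (sub_ne_zero.2 hx)
  filter_upwards [eventually_ge_atTop (2 / ‖x - p‖)] with a ha
  have ha₀ : 0 ≤ a := (by positivity : (0 : ℝ) ≤ 2 / ‖x - p‖).trans ha
  rw [cutoff, (unitBump E).zero_of_le_dist, sub_zero]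
  rw [dist_zero_right, norm_smul, Real.norm_of_nonneg ha₀]
  exact (div_le_iff₀ hpos).1 ha

theorem notMem_tsupport_cutoff (p : E) (a : ℝ) : p ∉ tsupport (cutoff p a) := by
  rw [notMem_tsupport_iff_eventuallyEq]
  have hnear : ∀ᶠ x in 𝓝 p, a • (x - p) ∈ Metric.ball (0 : E) 1 :=
    (by fun_prop : Continuous fun x => a • (x - p)).continuousAt.eventually_mem
      (by simpa using Metric.ball_mem_nhds (0 : E) one_pos)
  filter_upwards [hnear] with x hx
  rw [cutoff, (unitBump E).one_of_mem_closedBall (Metric.ball_subset_closedBall hx), sub_self,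
    Pi.zero_apply]

theorem tendsto_integral_cutoff_comp_mul {X : Type*} [MeasurableSpace X] {μ : Measure X}
    {g : X → E} (hg : AEStronglyMeasurable g μ) {p : E} (hp : ∀ᵐ x ∂μ, g x ≠ p) {f : X → ℝ}
    (hf : Integrable f μ) :
    Tendsto (fun a => ∫ x, cutoff p a (g x) * f x ∂μ) atTop (𝓝 (∫ x, f x ∂μ)) := by
  refine tendsto_integral_filter_of_dominated_convergence (fun x => ‖f x‖)
    (Eventually.of_forall fun a => ((contDiff_cutoff p a).continuous.comp_aestronglyMeasurable
      hg).mul hf.aestronglyMeasurable)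
    (Eventually.of_forall fun a => Eventually.of_forall fun x => ?_) hf.norm ?_
  · rw [norm_mul]
    exact mul_le_of_le_one_left (norm_nonneg _) (norm_cutoff_le_one p a _)
  · filter_upwards [hp] with x hx
    refine tendsto_const_nhds.congr' ?_
    filter_upwards [eventually_cutoff_eq_one hx] with a ha
    rw [ha, one_mul]

theorem fderiv_cutoff (p : E) (a : ℝ) (x : E) :
    fderiv ℝ (cutoff p a) x = -(a • fderiv ℝ (unitBump E) (a • (x - p))) := by
  have hinner : HasFDerivAt (fun x : E => a • (x - p)) (a • ContinuousLinearMap.id ℝ E) x :=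
    ((hasFDerivAt_id x).sub_const p).const_smul a
  have hbump := ((unitBump E).contDiff (n := 1)).differentiable one_ne_zero (a • (x - p))
  rw [((hbump.hasFDerivAt.comp x hinner).const_sub 1 : HasFDerivAt (cutoff p a) _ x).fderiv]
  ext v
  simp

variable [FiniteDimensional ℝ E] [MeasurableSpace E] [BorelSpace E] {μ : Measure E}
  [μ.IsAddHaarMeasure]

theorem integrable_fderiv_cutoff (p : E) {a : ℝ} (ha : a ≠ 0) (v : E) :
    Integrable (fun x => fderiv ℝ (cutoff p a) x v) μ := by
  have hbump : Integrable (fun x => fderiv ℝ (unitBump E) x v) μ :=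
    (((unitBump E).contDiff.continuous_fderiv one_ne_zero).clm_apply
      continuous_const).integrable_of_hasCompactSupport
        ((unitBump E).hasCompactSupport.fderiv_apply ℝ v)
  simpa [fderiv_cutoff] using (((hbump.comp_smul ha).comp_sub_right p).const_mul a).neg

theorem integral_norm_fderiv_cutoff (p : E) {a : ℝ} (ha : 0 < a) (v : E) :
    ∫ x, ‖fderiv ℝ (cutoff p a) x v‖ ∂μ =
      a * (a ^ Module.finrank ℝ E)⁻¹ * ∫ x, ‖fderiv ℝ (unitBump E) x v‖ ∂μ := by
  simp_rw [fderiv_cutoff]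
  rw [integral_sub_right_eq_self
    (fun x => ‖(-(a • fderiv ℝ (unitBump E) (a • x))) v‖) p]
  simp only [_root_.neg_apply, _root_.smul_apply, smul_eq_mul, norm_neg, norm_mul,
    Real.norm_of_nonneg ha.le]
  rw [integral_const_mul, Measure.integral_comp_smul μ (fun x => ‖fderiv ℝ (unitBump E) x v‖),
    abs_of_pos (by positivity), smul_eq_mul, mul_assoc]

theorem tendsto_integral_norm_fderiv_cutoff (hE : 1 < Module.finrank ℝ E) (p v : E) :
    Tendsto (fun a => ∫ x, ‖fderiv ℝ (cutoff p a) x v‖ ∂μ) atTop (𝓝 0) := by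
  obtain ⟨d, hd⟩ := Nat.exists_eq_add_of_lt hE
  have hlim : Tendsto (fun a : ℝ => (a ^ (d + 1))⁻¹ * ∫ x, ‖fderiv ℝ (unitBump E) x v‖ ∂μ)
      atTop (𝓝 0) := by
    simpa using (tendsto_inv_atTop_zero.comp
      (tendsto_pow_atTop (α := ℝ) d.succ_ne_zero)).mul_const _
  refine hlim.congr' ?_
  filter_upwards [eventually_gt_atTop 0] with a ha
  rw [integral_norm_fderiv_cutoff p ha v, hd, add_comm 1, pow_succ _ (d + 1), mul_inv_rev,
    mul_inv_cancel_left₀ ha.ne']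

theorem tendsto_setIntegral_fderiv_cutoff_mul (hE : 1 < Module.finrank ℝ E) (p v : E)
    {f : E → ℝ} (hf : Continuous f) {Ω : Set E} (hΩm : MeasurableSet Ω)
    (hΩ : Bornology.IsBounded Ω) :
    Tendsto (fun a => ∫ x in Ω, fderiv ℝ (cutoff p a) x v * f x ∂μ) atTop (𝓝 0) := by
  obtain ⟨M, hM⟩ := hΩ.isCompact_closure.exists_bound_of_continuousOn hf.continuousOn
  refine squeeze_zero_norm' ?_ (by
    simpa using (tendsto_integral_norm_fderiv_cutoff hE p v (μ := μ)).mul_const |M|)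
  filter_upwards [eventually_gt_atTop 0] with a ha
  have hint : Integrable (fun x => ‖fderiv ℝ (cutoff p a) x v‖ * |M|) μ :=
    (integrable_fderiv_cutoff p ha.ne' v).norm.mul_const _
  calc ‖∫ x in Ω, fderiv ℝ (cutoff p a) x v * f x ∂μ‖
      ≤ ∫ x in Ω, ‖fderiv ℝ (cutoff p a) x v‖ * |M| ∂μ := by
        refine norm_integral_le_of_norm_le hint.integrableOn ?_
        filter_upwards [ae_restrict_mem hΩm] with x hx
        rw [norm_mul]
        gcongr
        exact (hM x (subset_closure hx)).trans (le_abs_self M)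
    _ ≤ ∫ x, ‖fderiv ℝ (cutoff p a) x v‖ * |M| ∂μ :=
        setIntegral_le_integral hint (Eventually.of_forall fun x => by positivity)
    _ = (∫ x, ‖fderiv ℝ (cutoff p a) x v‖ ∂μ) * |M| := integral_mul_const _ _

end Cutoff

theorem GreenOn.of_compl_singleton {γ : ℝ → ℝ × ℝ} {T j : ℝ} {Ω : Set (ℝ × ℝ)} {p : ℝ × ℝ}
    (hγ : ContDiff ℝ 1 γ) (hT : 0 ≤ T) (hΩm : MeasurableSet Ω) (hΩb : Bornology.IsBounded Ω)
    (hp : ∀ᵐ t ∂volume.restrict (Ioc 0 T), γ t ≠ p) (hgreen : GreenOn γ T Ω j {p}ᶜ) :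
    GreenOn γ T Ω j univ := by
  intro φ hφ _ v
  have hfderiv (a : ℝ) (x : ℝ × ℝ) : fderiv ℝ (fun x => cutoff p a x * φ x) x v =
      cutoff p a x * fderiv ℝ φ x v + fderiv ℝ (cutoff p a) x v * φ x := by
    rw [fderiv_fun_mul ((contDiff_cutoff p a).differentiable one_ne_zero x)
      (hφ.differentiable one_ne_zero x)]
    simp [mul_comm]
  have hφv : Continuous fun x => fderiv ℝ φ x v :=
    (hφ.continuous_fderiv one_ne_zero).clm_apply continuous_const
  have hline : Continuous fun t => φ (γ t) * wedge (deriv γ t) v :=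
    (hφ.continuous.comp hγ.continuous).mul
      (continuous_wedge (hγ.continuous_deriv le_rfl) continuous_const)
  have hcutoff (a : ℝ) : (∫ x in Ω, cutoff p a x * fderiv ℝ φ x v) +
      ∫ x in Ω, fderiv ℝ (cutoff p a) x v * φ x =
        j * ∫ t in Ioc 0 T, cutoff p a (γ t) * (φ (γ t) * wedge (deriv γ t) v) := by
    have hcχ := contDiff_cutoff p a
    have hfst : IntegrableOn (fun x => cutoff p a x * fderiv ℝ φ x v) Ω :=
      integrableOn_of_continuous_of_isBounded (hcχ.continuous.mul hφv) hΩb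
    have hsnd : IntegrableOn (fun x => fderiv ℝ (cutoff p a) x v * φ x) Ω :=
      integrableOn_of_continuous_of_isBounded
        (((hcχ.continuous_fderiv one_ne_zero).clm_apply continuous_const).mul hφ.continuous) hΩb
    rw [← integral_add hfst hsnd, ← intervalIntegral.integral_of_le hT]
    simpa only [hfderiv, mul_assoc] using hgreen (fun x => cutoff p a x * φ x) (hcχ.mul hφ)
      (fun x hx hxp => notMem_tsupport_cutoff p a (hxp ▸ tsupport_mul_subset_left hx :)) v
  have hlim_area := (tendsto_integral_cutoff_comp_mul (μ := volume.restrict Ω) (g := id) (p := p)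
    aestronglyMeasurable_id (ae_restrict_of_ae (by simp [ae_iff]))
    (integrableOn_of_continuous_of_isBounded hφv hΩb)).add
      (tendsto_setIntegral_fderiv_cutoff_mul (μ := volume) (by simp) p v hφ.continuous hΩm hΩb)
  have hlim_line := (tendsto_integral_cutoff_comp_mul hγ.continuous.aestronglyMeasurable hp
    hline.integrableOn_Ioc).const_mul j
  rw [intervalIntegral.integral_of_le hT, ← add_zero (∫ x in Ω, _)]
  exact tendsto_nhds_unique hlim_area (hlim_line.congr fun a => (hcutoff a).symm)

theorem GreenOn.ne_zero {γ : ℝ → ℝ × ℝ} {T j : ℝ} {Ω : Set (ℝ × ℝ)} (hΩo : IsOpen Ω)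
    (hΩb : Bornology.IsBounded Ω) (hne : Ω.Nonempty) (hgreen : GreenOn γ T Ω j univ) :
    j ≠ 0 := by
  rintro rfl
  have harea := hgreen Prod.fst contDiff_fst (subset_univ _) (1, 0)
  simp only [fderiv_fst, ContinuousLinearMap.coe_fst', integral_const, smul_eq_mul, mul_one,
    zero_mul, measureReal_restrict_apply_univ] at harea
  exact (ENNReal.toReal_pos (hΩo.measure_pos volume hne).ne' hΩb.measure_lt_top.ne).ne' harea

theorem IsRegularLoop.exists_greenOn_univ {γ : ℝ → ℝ × ℝ} {T : ℝ} {Ω : Set (ℝ × ℝ)}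
    (hγ : IsRegularLoop γ T) (hT : 0 < T) (hΩo : IsOpen Ω) (hΩb : Bornology.IsBounded Ω)
    (hfr : frontier Ω = γ '' Icc 0 T) :
    ∃ j : ℝ, j * j = 1 ∧ GreenOn γ T Ω j univ := by
  obtain ⟨j, hj⟩ := hγ.exists_greenOn_compl_singleton hT.le hΩo hΩb hfr
  have hbase : ∀ᵐ t ∂volume.restrict (Ioc 0 T), γ t ≠ γ 0 := by
    filter_upwards [ae_restrict_mem measurableSet_Ioc,
      ae_restrict_of_ae (compl_mem_ae_iff.2 (measure_singleton T))] with t ht htT h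
    exact htT (hγ.injOn_Ioc ht ⟨hT, le_rfl⟩ (h.trans hγ.closed))
  have hgreen := hj.of_compl_singleton hγ.contDiff hT.le hΩo.measurableSet hΩb hbase
  have hne : Ω.Nonempty := nonempty_iff_ne_empty.2 fun h => by
    rw [h, frontier_empty] at hfr
    exact (hfr ▸ mem_image_of_mem γ (left_mem_Icc.2 hT.le) : γ 0 ∈ (∅ : Set (ℝ × ℝ)))
  have hj₀ := hgreen.ne_zero hΩo hΩb hne
  refine ⟨j, ?_, hgreen⟩
  cases j
  · exact absurd rfl hj₀
  · norm_num
  · norm_num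

/-- `ν` is the outward normal of `Ω` along `γ`, weighted by arc length, in the weak sense that the
divergence theorem holds for every `C¹` field of constant direction. -/
structure IsWeakNormal {E : Type*} [NormedAddCommGroup E] [InnerProductSpace ℝ E]
    [MeasureSpace E] (γ ν : ℝ → E) (T : ℝ) (Ω : Set E) : Prop where
  continuous : Continuous ν
  integral_fderiv : ∀ φ : E → ℝ, ContDiff ℝ 1 φ → ∀ v,
    ∫ x in Ω, fderiv ℝ φ x v = ∫ t in 0..T, φ (γ t) * ⟪ν t, v⟫

/-- The identification of the Euclidean plane with `ℝ × ℝ`, which carries the sup norm. -/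
def planeEquiv : E2 ≃L[ℝ] ℝ × ℝ :=
  (EuclideanSpace.equiv (Fin 2) ℝ).trans (ContinuousLinearEquiv.finTwoArrow ℝ ℝ)

theorem planeEquiv_apply (x : E2) : planeEquiv x = (x 0, x 1) := rfl

theorem measurePreserving_planeEquiv : MeasurePreserving planeEquiv :=
  (volume_preserving_finTwoArrow ℝ).comp
    (EuclideanSpace.volume_preserving_symm_measurableEquiv_toLp (Fin 2))

/-- The counterclockwise rotation of the Euclidean plane by a right angle. -/
def rot (x : E2) : E2 := !₂[-x 1, x 0]

theorem continuous_rot : Continuous rot := by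
  unfold rot
  fun_prop

theorem inner_rot_rot (x y : E2) : ⟪rot x, rot y⟫ = ⟪x, y⟫ := by
  simp [rot, PiLp.inner_apply, Fin.sum_univ_two, add_comm]

theorem wedge_planeEquiv (x y : E2) : wedge (planeEquiv x) (planeEquiv y) = ⟪rot x, y⟫ := by
  simp [wedge, planeEquiv_apply, rot, PiLp.inner_apply, Fin.sum_univ_two]
  ring

theorem IsRegularLoop.deriv_equiv_comp {E F : Type*} [NormedAddCommGroup E] [NormedSpace ℝ E]
    [NormedAddCommGroup F] [NormedSpace ℝ F] {γ : ℝ → E} {T : ℝ} (hγ : IsRegularLoop γ T)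
    (e : E ≃L[ℝ] F) (t : ℝ) : deriv (e ∘ γ) t = e (deriv γ t) :=
  (e.hasFDerivAt.comp_hasDerivAt t
    (hγ.contDiff.differentiable one_ne_zero t).hasDerivAt).deriv

theorem IsRegularLoop.equiv_comp {E F : Type*} [NormedAddCommGroup E] [NormedSpace ℝ E]
    [NormedAddCommGroup F] [NormedSpace ℝ F] {γ : ℝ → E} {T : ℝ} (hγ : IsRegularLoop γ T)
    (e : E ≃L[ℝ] F) : IsRegularLoop (e ∘ γ) T where
  contDiff := e.contDiff.comp hγ.contDiff
  closed := congrArg e hγ.closed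
  injOn := e.injective.comp_injOn hγ.injOn
  deriv_ne_zero t ht := by
    rw [hγ.deriv_equiv_comp]
    exact e.map_ne_zero_iff.2 (hγ.deriv_ne_zero t ht)

theorem IsRegularLoop.exists_isWeakNormal {γ : ℝ → E2} {T : ℝ} {Ω : Set E2}
    (hγ : IsRegularLoop γ T) (hT : 0 < T) (hΩo : IsOpen Ω) (hΩb : Bornology.IsBounded Ω)
    (hfr : frontier Ω = γ '' Icc 0 T) :
    ∃ ν, IsWeakNormal γ ν T Ω ∧ ∀ s t, ⟪ν s, ν t⟫ = ⟪deriv γ s, deriv γ t⟫ := by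
  obtain ⟨j, hj, hgreen⟩ := (hγ.equiv_comp planeEquiv).exists_greenOn_univ hT
    (Ω := planeEquiv '' Ω) (planeEquiv.toHomeomorph.isOpenMap Ω hΩo)
    (planeEquiv.toContinuousLinearMap.lipschitz.isBounded_image hΩb)
    (by rw [image_comp, ← hfr]; exact (planeEquiv.toHomeomorph.image_frontier Ω).symm)
  refine ⟨fun t => j • rot (deriv γ t),
    ⟨(continuous_rot.comp hγ.continuous_deriv).const_smul j, fun φ hφ v => ?_⟩, fun s t => ?_⟩
  · have h := hgreen (φ ∘ planeEquiv.symm) (hφ.comp planeEquiv.symm.contDiff) (subset_univ _)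
      (planeEquiv v)
    rw [measurePreserving_planeEquiv.setIntegral_image_emb
      planeEquiv.toHomeomorph.measurableEmbedding] at h
    simp only [planeEquiv.symm.comp_right_fderiv, hγ.deriv_equiv_comp] at h
    simpa [wedge_planeEquiv, real_inner_smul_left, mul_left_comm] using h
  · rw [real_inner_smul_left, real_inner_smul_right, ← mul_assoc, hj, one_mul, inner_rot_rot]

section Energy

variable {E : Type*} [NormedAddCommGroup E] [InnerProductSpace ℝ E] [FiniteDimensional ℝ E]

theorem laplacian_eq_sum_fderiv_fderiv {ι : Type*} [Fintype ι] (b : OrthonormalBasis ι ℝ E)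
    (g : E → ℝ) (x : E) :
    Laplacian.laplacian g x = ∑ i, fderiv ℝ (fderiv ℝ g) x (b i) (b i) := by
  simp [InnerProductSpace.laplacian_eq_iteratedFDeriv_orthonormalBasis g b,
    iteratedFDeriv_two_apply]

theorem laplacian_comp_sub_const (g : E → ℝ) (y x : E) :
    Laplacian.laplacian (fun x => g (x - y)) x = Laplacian.laplacian g (x - y) := by
  have : fderiv ℝ (fun x => g (x - y)) = fun x => fderiv ℝ g (x - y) :=
    funext fun _ => fderiv_comp_sub y
  simp only [laplacian_eq_sum_fderiv_fderiv (stdOrthonormalBasis ℝ E), this, fderiv_comp_sub]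

variable [MeasureSpace E] [BorelSpace E] [IsFiniteMeasureOnCompacts (volume : Measure E)]
  {γ ν : ℝ → E} {T : ℝ} {Ω : Set E}

theorem IsWeakNormal.integral_fderiv_apply_normal (hν : IsWeakNormal γ ν T Ω)
    (hγ : Continuous γ) (hΩb : Bornology.IsBounded Ω) {g : E → ℝ} (hg : ContDiff ℝ 2 g) :
    ∫ t in 0..T, fderiv ℝ g (γ t) (ν t) = ∫ x in Ω, Laplacian.laplacian g x := by
  let b := stdOrthonormalBasis ℝ E
  have hg₁ : ContDiff ℝ 1 (fderiv ℝ g) := hg.fderiv_right le_rfl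
  have : Continuous (fderiv ℝ (fderiv ℝ g)) := hg₁.continuous_fderiv one_ne_zero
  have hexpand (t : ℝ) :
      fderiv ℝ g (γ t) (ν t) = ∑ i, fderiv ℝ g (γ t) (b i) * ⟪ν t, b i⟫ := by
    conv_lhs => rw [← b.sum_repr' (ν t)]
    simp [real_inner_comm, mul_comm]
  have hcomp (i) : ∫ t in 0..T, fderiv ℝ g (γ t) (b i) * ⟪ν t, b i⟫ =
      ∫ x in Ω, fderiv ℝ (fderiv ℝ g) x (b i) (b i) := by
    rw [← hν.integral_fderiv (fun x => fderiv ℝ g x (b i)) (hg₁.clm_apply contDiff_const)]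
    simp [fderiv_clm_apply (hg₁.differentiable one_ne_zero _)]
  have := hν.continuous
  have := hg₁.continuous
  simp_rw [hexpand, laplacian_eq_sum_fderiv_fderiv b g]
  rw [intervalIntegral.integral_finsetSum fun i _ =>
      (by fun_prop : Continuous _).intervalIntegrable 0 T,
    integral_finsetSum _ fun i _ =>
      integrableOn_of_continuous_of_isBounded (by fun_prop) hΩb]
  exact Finset.sum_congr rfl fun i _ => hcomp i

theorem IsWeakNormal.energy_eq_neg_integral_laplacian [SFinite (volume : Measure E)]
    (hν : IsWeakNormal γ ν T Ω) (hγ : Continuous γ) (hΩb : Bornology.IsBounded Ω) {g : E → ℝ}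
    (hg : ContDiff ℝ 2 g) :
    ∫ s in 0..T, ∫ t in 0..T, g (γ s - γ t) * ⟪ν s, ν t⟫ =
      -∫ y in Ω, ∫ x in Ω, Laplacian.laplacian g (x - y) := by
  have hreflect (s : ℝ) (y : E) : fderiv ℝ (fun y => g (γ s - y)) y = -fderiv ℝ g (γ s - y) := by
    simpa [Function.comp_def] using ((hg.differentiable two_ne_zero _).hasFDerivAt.comp y
      ((hasFDerivAt_id y).const_sub (γ s))).fderiv
  have hinner (s : ℝ) : ∫ t in 0..T, g (γ s - γ t) * ⟪ν s, ν t⟫ =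
      -∫ y in Ω, fderiv ℝ g (γ s - y) (ν s) := by
    simp_rw [real_inner_comm _ (ν s)]
    rw [← hν.integral_fderiv (fun y => g (γ s - y))
      ((hg.of_le one_le_two).comp (contDiff_const.sub contDiff_id)), ← integral_neg]
    simp [hreflect]
  have houter (y : E) : ∫ s in 0..T, fderiv ℝ g (γ s - y) (ν s) =
      ∫ x in Ω, Laplacian.laplacian g (x - y) := by
    simpa only [fderiv_comp_sub, laplacian_comp_sub_const] using
      hν.integral_fderiv_apply_normal hγ hΩb (g := fun x => g (x - y))
        (hg.comp (contDiff_id.sub contDiff_const))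
  have hν' := hν.continuous
  have hg' : Continuous (fderiv ℝ g) := hg.continuous_fderiv two_ne_zero
  simp_rw [hinner, intervalIntegral.integral_neg]
  rw [intervalIntegral_integral_swap]
  · simp_rw [houter]
  · exact integrable_prod_restrict_of_continuous (Metric.isBounded_Ioc _ _) hΩb
      (by fun_prop)

end Energy

section RegularizedLogarithm

variable {E : Type*} [NormedAddCommGroup E] {ε : ℝ}

/-- The logarithmic kernel `log ‖z‖`, regularised at scale `ε` to `log √(‖z‖² + ε²)`. It is smooth
for `ε ≠ 0`, and `regLog 0 z = log ‖z‖`. -/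
def regLog (ε : ℝ) (z : E) : ℝ := 2⁻¹ * Real.log (‖z‖ ^ 2 + ε ^ 2)

theorem continuous_regLog (hε : ε ≠ 0) : Continuous (regLog ε : E → ℝ) :=
  continuous_const.mul <| Continuous.log (by fun_prop) fun _ => by positivity

variable [InnerProductSpace ℝ E]

theorem contDiff_regLog (hε : ε ≠ 0) {n : ℕ∞} : ContDiff ℝ n (regLog ε : E → ℝ) :=
  contDiff_const.mul <| ((contDiff_norm_sq ℝ).add contDiff_const).log fun _ => by positivity

theorem hasFDerivAt_regLog (hε : ε ≠ 0) (z : E) :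
    HasFDerivAt (regLog ε) ((‖z‖ ^ 2 + ε ^ 2)⁻¹ • innerSL ℝ z) z := by
  have hsq := ((hasStrictFDerivAt_norm_sq z).hasFDerivAt.add_const (ε ^ 2)).log (by positivity)
  refine (hsq.const_mul 2⁻¹).congr_fderiv ?_
  ext v
  simp
  ring

theorem fderiv_fderiv_regLog_apply (hε : ε ≠ 0) (z v w : E) :
    fderiv ℝ (fderiv ℝ (regLog ε)) z v w =
      ⟪v, w⟫ / (‖z‖ ^ 2 + ε ^ 2) - 2 * ⟪z, v⟫ * ⟪z, w⟫ / (‖z‖ ^ 2 + ε ^ 2) ^ 2 := by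
  have hN : ‖z‖ ^ 2 + ε ^ 2 ≠ 0 := by positivity
  have hsq := (hasStrictFDerivAt_norm_sq z).hasFDerivAt.add_const (ε ^ 2)
  have hgrad : fderiv ℝ (regLog ε) = fun z : E => (‖z‖ ^ 2 + ε ^ 2)⁻¹ • innerSL ℝ z :=
    funext fun z => (hasFDerivAt_regLog hε z).fderiv
  have hgrad' : HasFDerivAt (fun z : E => (‖z‖ ^ 2 + ε ^ 2)⁻¹ • innerSL ℝ z) _ z :=
    ((hasDerivAt_inv hN).comp_hasFDerivAt z hsq).smul
      (innerSL ℝ : E →L[ℝ] E →L[ℝ] ℝ).hasFDerivAt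
  have hinner : (innerSL ℝ : E →L[ℝ] E →L[ℝ] ℝ) v w = ⟪v, w⟫ := rfl
  rw [hgrad, hgrad'.fderiv]
  simp [hinner]
  field_simp
  ring

theorem laplacian_regLog [FiniteDimensional ℝ E] (hε : ε ≠ 0) (z : E) :
    Laplacian.laplacian (regLog ε : E → ℝ) z =
      Module.finrank ℝ E / (‖z‖ ^ 2 + ε ^ 2) - 2 * ‖z‖ ^ 2 / (‖z‖ ^ 2 + ε ^ 2) ^ 2 := by
  let b := stdOrthonormalBasis ℝ E
  have hsum : ∑ i, ⟪z, b i⟫ * ⟪z, b i⟫ = ‖z‖ ^ 2 := by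
    rw [← real_inner_self_eq_norm_sq, ← b.sum_inner_mul_inner]
    simp_rw [real_inner_comm z]
  simp_rw [laplacian_eq_sum_fderiv_fderiv b, fderiv_fderiv_regLog_apply hε,
    real_inner_self_eq_norm_sq, b.norm_eq_one, Finset.sum_sub_distrib, ← Finset.sum_div, mul_assoc,
    ← Finset.mul_sum, hsum]
  simp

end RegularizedLogarithm

section ApproximateIdentity

theorem norm_indicator_one_mul_le {α : Type*} {s : Set α} (x : α) (r : ℝ) :
    ‖s.indicator 1 x * r‖ ≤ ‖r‖ := by
  by_cases hx : x ∈ s <;> simp [hx]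

variable {E : Type*} [NormedAddCommGroup E] [NormedSpace ℝ E]
  [MeasurableSpace E] [BorelSpace E] {μ : Measure E} {K : E → ℝ} {Ω : Set E}

theorem tendsto_integral_indicator_dilation (hK : Integrable K μ) (hΩ : IsOpen Ω) {y : E}
    (hy : y ∈ Ω) :
    Tendsto (fun ε : ℝ => ∫ z, Ω.indicator 1 (ε • z + y) * K z ∂μ) (𝓝[>] 0) (𝓝 (∫ z, K z ∂μ)) := by
  refine tendsto_integral_filter_of_dominated_convergence (fun z => ‖K z‖)
    (.of_forall fun ε => ?_) (.of_forall fun ε => .of_forall fun z =>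
      norm_indicator_one_mul_le _ _) hK.norm (.of_forall fun z => ?_)
  · have : Measurable fun z => Ω.indicator (1 : E → ℝ) (ε • z + y) :=
      (measurable_one.indicator hΩ.measurableSet).comp (by fun_prop)
    exact this.aestronglyMeasurable.mul hK.1
  · have hcont : Tendsto (fun ε : ℝ => ε • z + y) (𝓝[>] 0) (𝓝 y) := by
      have : Continuous fun ε : ℝ => ε • z + y := by fun_prop
      simpa using (this.tendsto 0).mono_left nhdsWithin_le_nhds
    refine tendsto_const_nhds.congr' ?_
    filter_upwards [hcont (hΩ.mem_nhds hy)] with ε hε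
    simp [indicator_of_mem (show ε • z + y ∈ Ω from hε)]

variable [FiniteDimensional ℝ E] [μ.IsAddHaarMeasure]

theorem setIntegral_scaled_kernel_eq (hΩ : MeasurableSet Ω) {ε : ℝ} (hε : 0 < ε) (y : E) :
    ∫ x in Ω, (ε ^ Module.finrank ℝ E)⁻¹ * K (ε⁻¹ • (x - y)) ∂μ =
      ∫ z, Ω.indicator 1 (ε • z + y) * K z ∂μ := by
  have hpt (x : E) : Ω.indicator (fun x => (ε ^ Module.finrank ℝ E)⁻¹ * K (ε⁻¹ • (x - y))) x =
      (ε ^ Module.finrank ℝ E)⁻¹ *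
        (Ω.indicator 1 (ε • (ε⁻¹ • (x - y)) + y) * K (ε⁻¹ • (x - y))) := by
    by_cases hx : x ∈ Ω <;> simp [smul_inv_smul₀ hε.ne', hx]
  rw [← integral_indicator hΩ]
  simp_rw [hpt, integral_const_mul]
  rw [integral_sub_right_eq_self (μ := μ) (fun x : E =>
      Ω.indicator 1 (ε • (ε⁻¹ • x) + y) * K (ε⁻¹ • x)) y,
    Measure.integral_comp_inv_smul_of_nonneg μ (fun z => Ω.indicator 1 (ε • z + y) * K z) hε.le,
    smul_eq_mul, inv_mul_cancel_left₀ (by positivity)]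

theorem tendsto_integral_integral_scaled_kernel (hK : Integrable K μ) (hΩo : IsOpen Ω)
    (hΩ : μ Ω ≠ ⊤) :
    Tendsto (fun ε : ℝ => ∫ y in Ω, ∫ x in Ω,
        (ε ^ Module.finrank ℝ E)⁻¹ * K (ε⁻¹ • (x - y)) ∂μ ∂μ)
      (𝓝[>] 0) (𝓝 (μ.real Ω * ∫ z, K z ∂μ)) := by
  have hscale : (fun ε : ℝ => ∫ y in Ω, ∫ z, Ω.indicator 1 (ε • z + y) * K z ∂μ ∂μ) =ᶠ[𝓝[>] 0]
      fun ε => ∫ y in Ω, ∫ x in Ω, (ε ^ Module.finrank ℝ E)⁻¹ * K (ε⁻¹ • (x - y)) ∂μ ∂μ := by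
    filter_upwards [self_mem_nhdsWithin] with ε hε
    simp_rw [setIntegral_scaled_kernel_eq hΩo.measurableSet hε]
  have hlimit : μ.real Ω * ∫ z, K z ∂μ = ∫ _ in Ω, ∫ z, K z ∂μ ∂μ := by simp
  rw [hlimit]
  refine Tendsto.congr' hscale <| tendsto_integral_filter_of_dominated_convergence
    (fun _ => ∫ z, ‖K z‖ ∂μ) (.of_forall fun ε => ?_) (.of_forall fun ε => .of_forall fun y =>
      norm_integral_le_of_norm_le hK.norm (.of_forall fun z => norm_indicator_one_mul_le _ _))
    (integrableOn_const hΩ) ?_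
  · have : Measurable fun p : E × E => Ω.indicator (1 : E → ℝ) (ε • p.2 + p.1) :=
      (measurable_one.indicator hΩo.measurableSet).comp (by fun_prop)
    exact (this.aestronglyMeasurable.mul hK.1.comp_snd).integral_prod_right'
  · filter_upwards [ae_restrict_mem hΩo.measurableSet] with y hy
    exact tendsto_integral_indicator_dilation hK hΩo hy

end ApproximateIdentity

section LogarithmicMass

variable {E : Type*} [NormedAddCommGroup E] [InnerProductSpace ℝ E] [FiniteDimensional ℝ E]

theorem laplacian_regLog_eq_scaled {ε : ℝ} (hε : ε ≠ 0) (z : E) :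
    Laplacian.laplacian (regLog ε : E → ℝ) z =
      (ε ^ 2)⁻¹ * Laplacian.laplacian (regLog 1 : E → ℝ) (ε⁻¹ • z) := by
  rw [laplacian_regLog hε, laplacian_regLog one_ne_zero, norm_smul, norm_inv, mul_pow, inv_pow,
    Real.norm_eq_abs, sq_abs]
  have : ε ^ 2 + ‖z‖ ^ 2 ≠ 0 := by positivity
  field_simp

theorem laplacian_regLog_one_of_finrank_eq_two (hE : Module.finrank ℝ E = 2) (z : E) :
    Laplacian.laplacian (regLog 1 : E → ℝ) z = 2 / (‖z‖ ^ 2 + 1) ^ 2 := by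
  rw [laplacian_regLog one_ne_zero, hE]
  field_simp
  push_cast
  ring

theorem integral_Ioi_mul_two_div_sq_add_one_sq :
    ∫ r in Ioi (0 : ℝ), r * (2 / (r ^ 2 + 1) ^ 2) = 1 := by
  have hderiv (r : ℝ) : HasDerivAt (fun r : ℝ => -(r ^ 2 + 1)⁻¹) (r * (2 / (r ^ 2 + 1) ^ 2)) r := by
    refine (((hasDerivAt_pow 2 r).add_const 1).inv (by positivity)).neg.congr_deriv ?_
    simp
    ring
  have hlim : Tendsto (fun r : ℝ => -(r ^ 2 + 1)⁻¹) atTop (𝓝 0) := by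
    have : Tendsto (fun r : ℝ => r ^ 2 + 1) atTop atTop :=
      tendsto_atTop_add_const_right _ _ (tendsto_pow_atTop two_ne_zero)
    simpa using this.inv_tendsto_atTop.neg
  rw [integral_Ioi_of_hasDerivAt_of_nonneg' (fun r _ => hderiv r)
    (fun r (hr : 0 < r) => by positivity) hlim]
  norm_num

variable [MeasurableSpace E] [BorelSpace E]

theorem integral_laplacian_regLog_one (hE : Module.finrank ℝ E = 2) :
    ∫ z : E, Laplacian.laplacian (regLog 1 : E → ℝ) z = 2 * Real.pi := by
  have : Nontrivial E := Module.nontrivial_of_finrank_pos (R := ℝ) (by omega)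
  simp_rw [laplacian_regLog_one_of_finrank_eq_two hE]
  rw [integral_fun_norm_addHaar volume (fun r : ℝ => 2 / (r ^ 2 + 1) ^ 2), measureReal_def,
    InnerProductSpace.volume_ball_of_dim_even (k := 1) (by simpa using hE)]
  simp [hE, integral_Ioi_mul_two_div_sq_add_one_sq, Real.pi_nonneg]

theorem integrable_laplacian_regLog_one (hE : Module.finrank ℝ E = 2) :
    Integrable (Laplacian.laplacian (regLog 1 : E → ℝ)) :=
  Integrable.of_integral_ne_zero (by simp [integral_laplacian_regLog_one hE, Real.pi_ne_zero])

end LogarithmicMass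

section LogarithmicPotential

open Real

theorem integrable_posLog_inv : Integrable fun u : ℝ => log⁺ u⁻¹ := by
  have hlog : IntegrableOn (fun u : ℝ => max (-log u) 0) (Ioc (-1) 1) :=
    (intervalIntegral.intervalIntegrable_log' (a := -1) (b := 1)).1.neg.pos_part
  refine IntegrableOn.integrable_of_forall_notMem_eq_zero (s := Ioc (-1) 1)
    (hlog.congr_fun (fun u _ => by simp [posLog_apply, max_comm]) measurableSet_Ioc) fun u hu => ?_
  have hu1 : 1 ≤ |u| := by
    by_contra! h
    exact hu ⟨(abs_lt.1 h).1, (abs_lt.1 h).2.le⟩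
  rw [posLog_eq_zero_iff, abs_inv]
  exact inv_le_one_of_one_le₀ hu1

variable {E : Type*} [NormedAddCommGroup E] {γ : ℝ → E} {K : Set ℝ}

theorem lintegral_posLog_inv_mul_lt_top {c : ℝ} (hc : c ≠ 0) :
    ∫⁻ u : ℝ, ENNReal.ofReal (log⁺ (c * u)⁻¹) < ⊤ :=
  (hasFiniteIntegral_iff_ofReal (.of_forall fun _ => posLog_nonneg)).1
    (integrable_posLog_inv.comp_mul_left' hc).2

/-- The distance from `p` to an arc grows at least linearly with the parameter, measured from a
point of the arc nearest to `p`. -/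
theorem lintegral_posLog_inv_norm_sub_le {c : ℝ} (hc : 0 < c) (hK : IsCompact K)
    (hγ : ContinuousOn γ K) (hanti : ∀ t ∈ K, ∀ t' ∈ K, c * |t - t'| ≤ ‖γ t - γ t'‖) (p : E) :
    ∫⁻ t in K, ENNReal.ofReal (log⁺ ‖p - γ t‖⁻¹) ≤
      ∫⁻ u : ℝ, ENNReal.ofReal (log⁺ (c / 2 * u)⁻¹) := by
  rcases K.eq_empty_or_nonempty with rfl | hne
  · simp
  obtain ⟨t₀, ht₀, hmin⟩ := hK.exists_isMinOn hne (f := fun t => ‖p - γ t‖) (by fun_prop)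
  have hpt : ∀ᵐ t : ℝ, t ∈ K → ENNReal.ofReal (log⁺ ‖p - γ t‖⁻¹) ≤
      ENNReal.ofReal (log⁺ (c / 2 * (t - t₀))⁻¹) := by
    filter_upwards [volume.ae_ne t₀] with t hne ht
    have hfar : c / 2 * |t - t₀| ≤ ‖p - γ t‖ := by
      have := norm_sub_le (p - γ t₀) (p - γ t)
      rw [sub_sub_sub_cancel_left] at this
      have hnearest : ‖p - γ t₀‖ ≤ ‖p - γ t‖ := hmin ht
      linarith [hanti t ht t₀ ht₀]
    have : 0 < |t - t₀| := abs_pos.2 (sub_ne_zero.2 hne)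
    rw [← posLog_abs (c / 2 * (t - t₀))⁻¹, abs_inv, abs_mul, abs_of_pos (half_pos hc)]
    gcongr
  calc ∫⁻ t in K, ENNReal.ofReal (log⁺ ‖p - γ t‖⁻¹)
      ≤ ∫⁻ t in K, ENNReal.ofReal (log⁺ (c / 2 * (t - t₀))⁻¹) :=
        lintegral_mono_ae ((ae_restrict_iff' hK.measurableSet).2 hpt)
    _ ≤ ∫⁻ t : ℝ, ENNReal.ofReal (log⁺ (c / 2 * (t - t₀))⁻¹) := setLIntegral_le_lintegral _ _
    _ = _ := lintegral_sub_right_eq_self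
        (fun u : ℝ => ENNReal.ofReal (log⁺ (c / 2 * u)⁻¹)) t₀

variable [NormedSpace ℝ E]

theorem exists_forall_mul_abs_sub_le_norm_sub {t₀ : ℝ} {v : E}
    (hγ : HasStrictDerivAt γ v t₀) (hv : v ≠ 0) :
    ∃ c > 0, ∃ U ∈ 𝓝 t₀, ∀ t ∈ U, ∀ t' ∈ U, c * |t - t'| ≤ ‖γ t - γ t'‖ := by
  have hpos : 0 < ‖v‖ / 2 := by positivity
  have hnear := hγ.isLittleO.def hpos
  rw [nhds_prod_eq] at hnear
  obtain ⟨U, hU, hprod⟩ := mem_prod_self_iff.1 hnear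
  refine ⟨‖v‖ / 2, hpos, U, hU, fun t ht t' ht' => ?_⟩
  have hlin : ‖γ t - γ t' - (t - t') • v‖ ≤ ‖v‖ / 2 * |t - t'| := by
    simpa using hprod (mk_mem_prod ht ht')
  have := norm_sub_norm_le ((t - t') • v) (γ t - γ t')
  rw [norm_smul, norm_eq_abs, norm_sub_rev _ (γ t - γ t')] at this
  linarith

theorem exists_lintegral_posLog_inv_norm_sub_le (hγ : ContDiff ℝ 1 γ) (hK : IsCompact K)
    (hreg : ∀ t ∈ K, deriv γ t ≠ 0) :
    ∃ M < ⊤, ∀ p, ∫⁻ t in K, ENNReal.ofReal (log⁺ ‖p - γ t‖⁻¹) ≤ M := by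
  refine hK.induction_on (p := fun S => ∃ M < ⊤, ∀ p,
    ∫⁻ t in S, ENNReal.ofReal (log⁺ ‖p - γ t‖⁻¹) ≤ M) ⟨0, by simp⟩ ?_ ?_ fun t ht => ?_
  · rintro S S' hSS' ⟨M, hM, hle⟩
    exact ⟨M, hM, fun p => (lintegral_mono_set hSS').trans (hle p)⟩
  · rintro S S' ⟨M, hM, hle⟩ ⟨M', hM', hle'⟩
    exact ⟨M + M', ENNReal.add_lt_top.2 ⟨hM, hM'⟩, fun p =>
      (lintegral_union_le _ _ _).trans (add_le_add (hle p) (hle' p))⟩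
  · obtain ⟨c, hc, U, hU, hanti⟩ := exists_forall_mul_abs_sub_le_norm_sub
      (hγ.contDiffAt.hasStrictDerivAt one_ne_zero) (hreg t ht)
    obtain ⟨S, hS, hSU, hSc⟩ := local_compact_nhds hU
    exact ⟨S, mem_nhdsWithin_of_mem_nhds hS, _, lintegral_posLog_inv_mul_lt_top (half_pos hc).ne',
      lintegral_posLog_inv_norm_sub_le hc hSc hγ.continuous.continuousOn
        fun t ht t' ht' => hanti t (hSU ht) t' (hSU ht')⟩

theorem integrable_posLog_inv_norm_sub (hγ : ContDiff ℝ 1 γ) (hK : IsCompact K)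
    (hreg : ∀ t ∈ K, deriv γ t ≠ 0) :
    Integrable (fun p : ℝ × ℝ => log⁺ ‖γ p.1 - γ p.2‖⁻¹)
      ((volume.restrict K).prod (volume.restrict K)) := by
  have hcont := hγ.continuous
  have hmeas : Measurable fun p : ℝ × ℝ => log⁺ ‖γ p.1 - γ p.2‖⁻¹ :=
    continuous_posLog.measurable.comp (by fun_prop : Continuous _).measurable.inv
  obtain ⟨M, hM, hle⟩ := exists_lintegral_posLog_inv_norm_sub_le hγ hK hreg
  refine ⟨hmeas.aestronglyMeasurable, ?_⟩
  rw [hasFiniteIntegral_iff_ofReal (.of_forall fun _ => posLog_nonneg),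
    lintegral_prod _ hmeas.ennreal_ofReal.aemeasurable]
  calc ∫⁻ s in K, ∫⁻ t in K, ENNReal.ofReal (log⁺ ‖γ s - γ t‖⁻¹)
      ≤ ∫⁻ _ in K, M := lintegral_mono fun s => hle (γ s)
    _ = M * volume K := setLIntegral_const _ _
    _ < ⊤ := ENNReal.mul_lt_top hM hK.measure_lt_top

end LogarithmicPotential

section EnergyLimit

open Real

variable {E : Type*} [NormedAddCommGroup E] {ε T : ℝ} {γ : ℝ → E}

theorem regLog_zero (z : E) : regLog 0 z = log ‖z‖ := by
  simp [regLog]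

theorem abs_regLog_le {z : E} (hz : z ≠ 0) (hε₀ : 0 ≤ ε) (hε₁ : ε ≤ 1) :
    |regLog ε z| ≤ log⁺ ‖z‖⁻¹ + regLog 1 z := by
  have : 0 < ‖z‖ := norm_pos_iff.2 hz
  have hlower : regLog 0 z ≤ regLog ε z := by unfold regLog; gcongr
  have hupper : regLog ε z ≤ regLog 1 z := by unfold regLog; gcongr
  have hone : 0 ≤ regLog 1 z := mul_nonneg (by positivity) (log_nonneg (by simp))
  have hlog : -log ‖z‖ ≤ log⁺ ‖z‖⁻¹ := by
    rw [← log_inv]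
    exact le_max_right _ _
  rw [regLog_zero] at hlower
  exact abs_le.2 ⟨by linarith, by linarith [posLog_nonneg (x := ‖z‖⁻¹)]⟩

theorem tendsto_regLog {z : E} (hz : z ≠ 0) :
    Tendsto (fun ε => regLog ε z) (𝓝[>] 0) (𝓝 (log ‖z‖)) := by
  have hcont : ContinuousAt (fun ε => regLog ε z) 0 := by
    have : ‖z‖ ^ 2 + 0 ^ 2 ≠ 0 := by positivity
    unfold regLog
    fun_prop (disch := assumption)
  simpa [regLog_zero] using hcont.tendsto.mono_left nhdsWithin_le_nhds

theorem integral_integral_eq_integral_prod_restrict_Ioc (hT : 0 ≤ T) {f : ℝ × ℝ → ℝ}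
    (hf : Integrable f ((volume.restrict (Ioc 0 T)).prod (volume.restrict (Ioc 0 T)))) :
    ∫ s in 0..T, ∫ t in 0..T, f (s, t) =
      ∫ p, f p ∂(volume.restrict (Ioc 0 T)).prod (volume.restrict (Ioc 0 T)) := by
  simp_rw [intervalIntegral.integral_of_le hT]
  exact integral_integral hf

variable [NormedSpace ℝ E] {w : ℝ × ℝ → ℝ}

theorem IsRegularLoop.ae_ne (hγ : IsRegularLoop γ T) :
    ∀ᵐ p ∂(volume.restrict (Ioc 0 T)).prod (volume.restrict (Ioc 0 T)), γ p.1 ≠ γ p.2 := by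
  have hcont := hγ.contDiff.continuous
  have hopen : IsOpen {p : ℝ × ℝ | γ p.1 ≠ γ p.2} := isOpen_ne_fun (by fun_prop) (by fun_prop)
  refine (Measure.ae_prod_iff_ae_ae hopen.measurableSet).2 ?_
  filter_upwards [ae_restrict_mem measurableSet_Ioc] with s hs
  filter_upwards [ae_restrict_mem measurableSet_Ioc, Measure.ae_ne _ s] with t ht hne
  exact fun h => hne (hγ.injOn_Ioc hs ht h).symm

theorem IsRegularLoop.exists_integrable_bound_regLog (hγ : IsRegularLoop γ T) (hw : Continuous w) :
    ∃ B : ℝ × ℝ → ℝ,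
      Integrable B ((volume.restrict (Ioc 0 T)).prod (volume.restrict (Ioc 0 T))) ∧
      ∀ ε ∈ Icc 0 1, ∀ᵐ p ∂(volume.restrict (Ioc 0 T)).prod (volume.restrict (Ioc 0 T)),
        ‖regLog ε (γ p.1 - γ p.2) * w p‖ ≤ B p := by
  have hcont := hγ.contDiff.continuous
  obtain ⟨C, hC⟩ := (isCompact_Icc.prod isCompact_Icc).exists_bound_of_continuousOn
    (s := Icc 0 T ×ˢ Icc 0 T) hw.continuousOn
  have hsing : Integrable (fun p : ℝ × ℝ => log⁺ ‖γ p.1 - γ p.2‖⁻¹)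
      ((volume.restrict (Ioc 0 T)).prod (volume.restrict (Ioc 0 T))) := by
    simpa only [restrict_Ioc_eq_restrict_Icc] using
      integrable_posLog_inv_norm_sub hγ.contDiff isCompact_Icc hγ.deriv_ne_zero
  have hsmooth : Integrable (fun p : ℝ × ℝ => regLog 1 (γ p.1 - γ p.2))
      ((volume.restrict (Ioc 0 T)).prod (volume.restrict (Ioc 0 T))) :=
    integrable_prod_restrict_of_continuous (Metric.isBounded_Ioc _ _) (Metric.isBounded_Ioc _ _)
      ((continuous_regLog one_ne_zero).comp (by fun_prop))
  refine ⟨_, (hsing.add hsmooth).mul_const C, fun ε hε => ?_⟩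
  have hmem : ∀ᵐ p ∂(volume.restrict (Ioc 0 T)).prod (volume.restrict (Ioc 0 T)),
      p ∈ Ioc 0 T ×ˢ Ioc 0 T := by
    rw [Measure.prod_restrict]
    exact ae_restrict_mem (measurableSet_Ioc.prod measurableSet_Ioc)
  filter_upwards [hγ.ae_ne, hmem] with p hne hp
  have hreg := abs_regLog_le (sub_ne_zero.2 hne) hε.1 hε.2
  rw [norm_mul]
  exact mul_le_mul hreg (hC p (prod_mono Ioc_subset_Icc_self Ioc_subset_Icc_self hp))
    (norm_nonneg _) ((abs_nonneg _).trans hreg)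

theorem IsRegularLoop.tendsto_integral_regLog (hγ : IsRegularLoop γ T) (hT : 0 ≤ T)
    (hw : Continuous w) :
    Tendsto (fun ε => ∫ s in 0..T, ∫ t in 0..T, regLog ε (γ s - γ t) * w (s, t)) (𝓝[>] 0)
      (𝓝 (∫ s in 0..T, ∫ t in 0..T, log ‖γ s - γ t‖ * w (s, t))) := by
  have hcont := hγ.contDiff.continuous
  obtain ⟨B, hB, hle⟩ := hγ.exists_integrable_bound_regLog hw
  have hmeas (ε : ℝ) : Measurable fun p : ℝ × ℝ => regLog ε (γ p.1 - γ p.2) * w p := by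
    have hdist : Measurable fun p : ℝ × ℝ => ‖γ p.1 - γ p.2‖ :=
      (by fun_prop : Continuous _).measurable
    have := hw.measurable
    unfold regLog
    fun_prop
  have hprod {ε : ℝ} (hε : ε ∈ Icc 0 1) := integral_integral_eq_integral_prod_restrict_Ioc hT
    (hB.mono' (hmeas ε).aestronglyMeasurable (hle ε hε))
  have hsmall : ∀ᶠ ε : ℝ in 𝓝[>] 0, ε ∈ Icc 0 1 :=
    mem_of_superset (Ioc_mem_nhdsGT one_pos) Ioc_subset_Icc_self
  have hlim := tendsto_integral_filter_of_dominated_convergence B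
    (.of_forall fun ε => (hmeas ε).aestronglyMeasurable) (hsmall.mono hle) hB
    (hγ.ae_ne.mono fun p hne => (tendsto_regLog (sub_ne_zero.2 hne)).mul_const (w p))
  simp_rw [← regLog_zero] at hlim ⊢
  rw [hprod (left_mem_Icc.2 zero_le_one)]
  exact hlim.congr' (hsmall.mono fun ε hε => (hprod hε).symm)

end EnergyLimit

theorem statement18_general {γ : ℝ → E2} {T : ℝ} (hγ : IsRegularLoop γ T) (hT : 0 < T)
    {Ω : Set E2} (hΩo : IsOpen Ω) (hΩb : Bornology.IsBounded Ω)
    (hfr : frontier Ω = γ '' Icc 0 T) :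
    ∫ s in 0..T, ∫ t in 0..T, Real.log ‖γ s - γ t‖ * ⟪deriv γ s, deriv γ t⟫ =
      -(2 * Real.pi) * volume.real Ω := by
  obtain ⟨ν, hν, hinner⟩ := hγ.exists_isWeakNormal hT hΩo hΩb hfr
  have hdim : Module.finrank ℝ E2 = 2 := finrank_euclideanSpace_fin
  have hderiv := hγ.continuous_deriv
  have henergy (ε : ℝ) (hε : ε ∈ Ioi 0) :
      ∫ s in 0..T, ∫ t in 0..T, regLog ε (γ s - γ t) * ⟪deriv γ s, deriv γ t⟫ =
        -∫ y in Ω, ∫ x in Ω, (ε ^ Module.finrank ℝ E2)⁻¹ *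
          Laplacian.laplacian (regLog 1 : E2 → ℝ) (ε⁻¹ • (x - y)) := by
    simp_rw [← hinner, hdim, ← laplacian_regLog_eq_scaled (ne_of_gt hε)]
    exact hν.energy_eq_neg_integral_laplacian hγ.contDiff.continuous hΩb
      (contDiff_regLog (ne_of_gt hε) (n := 2))
  have hline := hγ.tendsto_integral_regLog hT.le
    (w := fun p => ⟪deriv γ p.1, deriv γ p.2⟫) (by fun_prop)
  have harea := (tendsto_integral_integral_scaled_kernel
    (integrable_laplacian_regLog_one hdim) hΩo hΩb.measure_lt_top.ne).neg
  have hlimit := tendsto_nhds_unique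
    (hline.congr' (eventually_nhdsWithin_of_forall henergy)) harea
  rw [integral_laplacian_regLog_one hdim] at hlimit
  linarith

/-- Let `γ : [0, 2π] → ℝ²` be a C¹ simple closed curve enclosing the
bounded region `Ω`.  Then
`∫₀^{2π} ∫₀^{2π} log ‖γ(s) − γ(t)‖ ⟨γ'(s), γ'(t)⟩ ds dt = −2π · area(Ω)`. -/
theorem statement18
    (γ : ℝ → E2) (hγ : ContDiff ℝ 1 γ)
    (hclosed : γ 0 = γ (2 * Real.pi))
    (hinj : Set.InjOn γ (Set.Ico 0 (2 * Real.pi)))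
    (hreg : ∀ t ∈ Set.Icc (0:ℝ) (2 * Real.pi), deriv γ t ≠ 0)
    (Ω : Set E2) (hΩo : IsOpen Ω) (hΩb : Bornology.IsBounded Ω)
    (hfr : frontier Ω = γ '' Set.Icc 0 (2 * Real.pi)) :
    (∫ s in (0:ℝ)..(2 * Real.pi), ∫ t in (0:ℝ)..(2 * Real.pi),
        Real.log ‖γ s - γ t‖ * ⟪deriv γ s, deriv γ t⟫) =
      -(2 * Real.pi) * (volume Ω).toReal :=
  statement18_general ⟨hγ, hclosed, hinj, hreg⟩ Real.two_pi_pos hΩo hΩb hfr
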